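/- arXiv:1512.00779 — 3 statements merged into one kernel-verified Lean document; each statement's English description precedes it below -/
import Mathlib

section
/- For every positive integer k, there exists a set of k dipole words, each of length 18k+42, that attractively encodes the canonical unsigned k-glue function (i.e., a length-(18k+42) dipole code attractively encoding it). -/
/-- The alphabet Σ = {0, 1, ⋄} of dipole letters. -/
inductive Dip : Type
  | zero : Dip
  | one : Dip
  | blank : Dip
  deriving DecidableEq

open Dip

/-- The force between a pair of letters: 1 if {x,y} = {0,1}, -1 if x = y ∈ {0,1}, 0 otherwise. -/
def lf : Dip → Dip → ℤ
  | zero, one => 1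
  | one, zero => 1
  | zero, zero => -1
  | one, one => -1
  | _, _ => 0

/-- The force between a pair of equal-length words: the sum of letterwise forces. -/
def force (X Y : List Dip) : ℤ := (List.zipWith lf X Y).sum

/-- The length-`i` suffix of a word. -/
def sufx (X : List Dip) (i : ℕ) : List Dip := X.drop (X.length - i)

/-- A pair of equal-length words `X`, `Y` is aligned provided `f(X,Y) ≤ 0` and all proper
prefix/suffix overlaps with `Y` and its reverse have non-positive force. -/
def aligned (X Y : List Dip) : Prop :=
  force X Y ≤ 0 ∧
    ∀ A ∈ [Y, Y.reverse], ∀ i, 1 ≤ i → i ≤ X.length - 1 →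
      force (X.take i) (sufx A i) ≤ 0 ∧ force (sufx X i) (A.take i) ≤ 0

/-- The words `W 1, …, W k` attractively encode the `k`-glue function `g`: every pair is
aligned and `f(Wᵢ, Rev(Wⱼ)) > 0` iff `g i j > 0`. -/
def attEncodes (k : ℕ) (W : ℕ → List Dip) (g : ℕ → ℕ → ℤ) : Prop :=
  (∀ i ∈ Finset.Icc 1 k, ∀ j ∈ Finset.Icc 1 k, aligned (W i) (W j)) ∧
    ∀ i ∈ Finset.Icc 1 k, ∀ j ∈ Finset.Icc 1 k,
      (0 < force (W i) ((W j).reverse) ↔ 0 < g i j)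

/-- The canonical unsigned `k`-glue function: `g i j = 1` if `i = j` and `0` otherwise. -/
def unsignedGlue (i j : ℕ) : ℤ := if i = j then 1 else 0

namespace DipoleCode

open Finset

/-- The numerical value of a letter, for which the force is minus the product. -/
def val : Dip → ℤ
  | zero => -1
  | one => 1
  | blank => 0

theorem lf_eq_neg_val_mul (x y : Dip) : lf x y = -(val x * val y) := by
  cases x <;> cases y <;> rfl

/-- The positions, centred so that reversal acts as `u ↦ -1 - u`, of the letters `1` shared by all
the words of the code. -/
def Frame (k u : ℤ) : Prop :=
  (-(2 * k + 7) ≤ u ∧ u ≤ -(k + 1)) ∨ (2 * k + 7 ≤ u ∧ u ≤ 3 * k + 11) ∨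
    (-(4 * k + 15) ≤ u ∧ u ≤ -(3 * k + 13)) ∨ (4 * k + 15 ≤ u ∧ u ≤ 5 * k + 17) ∨
    u = -(5 * k + 19)

instance (k u : ℤ) : Decidable (Frame k u) := by
  unfold Frame
  infer_instance

/-- The letter of the `i`-th word at the centred position `u`. -/
def letter (k i u : ℤ) : Dip :=
  if u = -i then zero else if u = i - 1 ∨ Frame k u then one else blank

/-- The value of the letter of the `i`-th word at the centred position `u`. -/
def amp (k i u : ℤ) : ℤ :=
  if u = -i then -1 else if u = i - 1 ∨ Frame k u then 1 else 0

theorem val_letter (k i u : ℤ) : val (letter k i u) = amp k i u := by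
  unfold letter amp
  split_ifs <;> rfl

theorem exists_add_eq_of_intervals {a b c d r : ℤ} (hab : a < b) (hcd : c < d)
    (hl : a + c + 1 ≤ r) (hr : r ≤ b + d - 1) :
    ∃ u, a ≤ u ∧ u + 1 ≤ b ∧ c ≤ r - u - 1 ∧ r - u ≤ d :=
  ⟨max a (r - d), by omega⟩

/-- Every nonzero relevant shift of the reversed frame meets the frame at least twice. -/
theorem exists_frame_add {k r : ℤ} (hk : 1 ≤ k) (hne : r ≠ -1) (hl : -(6 * k + 19) ≤ r)
    (hr : r ≤ 5 * k + 16) :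
    ∃ u w, u ≠ w ∧ Frame k u ∧ Frame k (r - u) ∧ Frame k w ∧ Frame k (r - w) := by
  unfold Frame
  have key : r = 0 ∨ r = -2 ∨ r = -(4 * k + 14) ∨ (1 ≤ r ∧ r ≤ 2 * k + 9) ∨
      (2 * k + 9 ≤ r ∧ r ≤ 4 * k + 15) ∨ (4 * k + 15 ≤ r) ∨ (-(2 * k + 7) ≤ r ∧ r ≤ -3) ∨
      (-(4 * k + 13) ≤ r ∧ r ≤ -(2 * k + 3)) ∨ r ≤ -(4 * k + 15) := by omega
  rcases key with h | h | h | h | h | h | h | h | h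
  · exact ⟨2 * k + 7, 4 * k + 15, by omega⟩
  · exact ⟨3 * k + 11, 5 * k + 17, by omega⟩
  · exact ⟨-(k + 1), -(3 * k + 13), by omega⟩
  · obtain ⟨u, hu⟩ := exists_add_eq_of_intervals (a := 2 * k + 7) (b := 3 * k + 11)
      (c := -(2 * k + 7)) (d := -(k + 1)) (r := r) (by omega) (by omega) (by omega) (by omega)
    exact ⟨u, u + 1, by omega⟩
  · obtain ⟨u, hu⟩ := exists_add_eq_of_intervals (a := 4 * k + 15) (b := 5 * k + 17)
      (c := -(2 * k + 7)) (d := -(k + 1)) (r := r) (by omega) (by omega) (by omega) (by omega)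
    exact ⟨u, u + 1, by omega⟩
  · obtain ⟨u, hu⟩ := exists_add_eq_of_intervals (a := 2 * k + 7) (b := 3 * k + 11)
      (c := 2 * k + 7) (d := 3 * k + 11) (r := r) (by omega) (by omega) (by omega) (by omega)
    exact ⟨u, u + 1, by omega⟩
  · obtain ⟨u, hu⟩ := exists_add_eq_of_intervals (a := 2 * k + 7) (b := 3 * k + 11)
      (c := -(4 * k + 15)) (d := -(3 * k + 13)) (r := r)
      (by omega) (by omega) (by omega) (by omega)
    exact ⟨u, u + 1, by omega⟩
  · obtain ⟨u, hu⟩ := exists_add_eq_of_intervals (a := -(2 * k + 7)) (b := -(k + 1))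
      (c := -(2 * k + 7)) (d := -(k + 1)) (r := r) (by omega) (by omega) (by omega) (by omega)
    exact ⟨u, u + 1, by omega⟩
  · obtain ⟨u, hu⟩ := exists_add_eq_of_intervals (a := -(2 * k + 7)) (b := -(k + 1))
      (c := -(4 * k + 15)) (d := -(3 * k + 13)) (r := r)
      (by omega) (by omega) (by omega) (by omega)
    exact ⟨u, u + 1, by omega⟩

/-- Every relevant shift of the frame meets the frame at least twice. -/
theorem exists_frame_sub {k m : ℤ} (hk : 1 ≤ k) (hl : 0 ≤ m) (hr : m ≤ 6 * k + 17) :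
    ∃ u w, u ≠ w ∧ Frame k u ∧ Frame k (u + m) ∧ Frame k w ∧ Frame k (w + m) := by
  unfold Frame
  have key : m ≤ k + 5 ∨ (k + 5 ≤ m ∧ m ≤ 3 * k + 9) ∨ (3 * k + 9 ≤ m ∧ m ≤ 5 * k + 17) ∨
      5 * k + 17 ≤ m := by omega
  rcases key with h | h | h | h
  · exact ⟨-(2 * k + 7), -(2 * k + 6), by omega⟩
  · obtain ⟨u, hu⟩ := exists_add_eq_of_intervals (a := 4 * k + 15) (b := 5 * k + 17)
      (c := -(3 * k + 11)) (d := -(2 * k + 7)) (r := m)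
      (by omega) (by omega) (by omega) (by omega)
    exact ⟨u - m, u + 1 - m, by omega⟩
  · obtain ⟨u, hu⟩ := exists_add_eq_of_intervals (a := 2 * k + 7) (b := 3 * k + 11)
      (c := k + 1) (d := 2 * k + 7) (r := m) (by omega) (by omega) (by omega) (by omega)
    exact ⟨u - m, u + 1 - m, by omega⟩
  · obtain ⟨u, hu⟩ := exists_add_eq_of_intervals (a := 4 * k + 15) (b := 5 * k + 17)
      (c := k + 1) (d := 2 * k + 7) (r := m) (by omega) (by omega) (by omega) (by omega)
    exact ⟨u - m, u + 1 - m, by omega⟩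

theorem sum_ite_eq_le_one {S : Finset ℤ} {τ : ℤ → ℤ} (hτ : Function.Injective τ) (c : ℤ) :
    ∑ u ∈ S, (if τ u = c then (1 : ℤ) else 0) ≤ 1 := by
  rw [← Finset.sum_filter, Finset.sum_const, nsmul_eq_mul, mul_one]
  have : #{u ∈ S | τ u = c} ≤ 1 := Finset.card_le_one.2 fun a ha b hb => hτ <| by
    rw [(Finset.mem_filter.1 ha).2, (Finset.mem_filter.1 hb).2]
  exact_mod_cast this

theorem amp_mul_amp_ge {k i j x y : ℤ} (hi : 1 ≤ i) (hik : i ≤ k) (hj : 1 ≤ j) (hjk : j ≤ k) :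
    (if Frame k x ∧ Frame k y then (1 : ℤ) else 0) - (if x = -i then 1 else 0)
      - (if y = -j then 1 else 0) ≤ amp k i x * amp k j y := by
  have hx : Frame k x → x ≠ -i := by unfold Frame; omega
  have hy : Frame k y → y ≠ -j := by unfold Frame; omega
  unfold amp
  split_ifs <;> simp_all

/-- Two common frame positions outweigh the at most two negative products. -/
theorem sum_amp_nonneg {k i j : ℤ} (hi : 1 ≤ i) (hik : i ≤ k) (hj : 1 ≤ j) (hjk : j ≤ k)
    {S : Finset ℤ} {τ σ : ℤ → ℤ} (hτ : Function.Injective τ) (hσ : Function.Injective σ)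
    {a b : ℤ} (haS : a ∈ S) (hbS : b ∈ S) (hab : a ≠ b)
    (ha : Frame k (τ a) ∧ Frame k (σ a)) (hb : Frame k (τ b) ∧ Frame k (σ b)) :
    0 ≤ ∑ u ∈ S, amp k i (τ u) * amp k j (σ u) := by
  have h₁ : (2 : ℤ) ≤ ∑ u ∈ S, (if Frame k (τ u) ∧ Frame k (σ u) then (1 : ℤ) else 0) := by
    have hsub : ({a, b} : Finset ℤ) ⊆ S := by
      intro x hx
      rcases Finset.mem_insert.1 hx with rfl | hx
      · exact haS
      · rwa [Finset.mem_singleton.1 hx]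
    refine le_trans (le_of_eq ?_) (Finset.sum_le_sum_of_subset_of_nonneg hsub ?_)
    · rw [Finset.sum_pair hab, if_pos ha, if_pos hb]
      norm_num
    · intro x _ _
      split_ifs <;> norm_num
  have h₂ := sum_ite_eq_le_one (S := S) hτ (-i)
  have h₃ := sum_ite_eq_le_one (S := S) hσ (-j)
  have h₄ := Finset.sum_le_sum fun u (_ : u ∈ S) =>
    amp_mul_amp_ge (x := τ u) (y := σ u) hi hik hj hjk
  rw [Finset.sum_sub_distrib, Finset.sum_sub_distrib] at h₄
  linarith

theorem amp_eq_zero {k i u : ℤ} (hi : 1 ≤ i) (hik : i ≤ k)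
    (hu : u < -(5 * k + 19) ∨ 5 * k + 17 < u) : amp k i u = 0 := by
  unfold amp Frame
  rw [if_neg (by omega), if_neg (by omega)]

theorem amp_nonneg {k i u : ℤ} (hu : u ≠ -i) : 0 ≤ amp k i u := by
  unfold amp
  rw [if_neg hu]
  split_ifs <;> norm_num

/-- A product of values is nonnegative when neither word's negative letter meets the other word. -/
theorem amp_mul_amp_nonneg {k i j x y : ℤ} (hi : 1 ≤ i) (hik : i ≤ k) (hj : 1 ≤ j) (hjk : j ≤ k)
    (hx : x = -i → y < -(5 * k + 19) ∨ 5 * k + 17 < y)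
    (hy : y = -j → x < -(5 * k + 19) ∨ 5 * k + 17 < x) : 0 ≤ amp k i x * amp k j y := by
  by_cases h : x = -i
  · rw [amp_eq_zero hj hjk (hx h), mul_zero]
  by_cases h' : y = -j
  · rw [amp_eq_zero hi hik (hy h'), zero_mul]
  exact mul_nonneg (amp_nonneg h) (amp_nonneg h')

theorem sum_amp_shift_nonneg {k i j m : ℤ} (hi : 1 ≤ i) (hik : i ≤ k) (hj : 1 ≤ j) (hjk : j ≤ k)
    (hm : 0 ≤ m) :
    0 ≤ ∑ u ∈ Ico (-(9 * k + 21)) (9 * k + 21), amp k i u * amp k j (u + m) := by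
  by_cases hle : m ≤ 6 * k + 17
  · obtain ⟨a, b, hab, ha, ha', hb, hb'⟩ := exists_frame_sub (by omega) hm hle
    refine sum_amp_nonneg hi hik hj hjk (τ := fun u => u) (σ := fun u => u + m) (a := a) (b := b)
      (fun _ _ h => h) (fun _ _ h => by simpa using h) ?_ ?_ hab ⟨ha, ha'⟩ ⟨hb, hb'⟩
    all_goals
      unfold Frame at *
      rw [Finset.mem_Ico]
      omega
  · exact Finset.sum_nonneg fun u _ =>
      amp_mul_amp_nonneg hi hik hj hjk (by omega) (by omega)

theorem sum_amp_reverse_shift_nonneg {k i j m : ℤ} (hi : 1 ≤ i) (hik : i ≤ k) (hj : 1 ≤ j)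
    (hjk : j ≤ k) (hm : m ≠ 0) :
    0 ≤ ∑ u ∈ Ico (-(9 * k + 21)) (9 * k + 21), amp k i u * amp k j (-1 - (u + m)) := by
  by_cases hle : -(6 * k + 19) ≤ -1 - m ∧ -1 - m ≤ 5 * k + 16
  · obtain ⟨a, b, hab, ha, ha', hb, hb'⟩ :=
      exists_frame_add (r := -1 - m) (by omega) (by omega) hle.1 hle.2
    rw [show -1 - m - a = -1 - (a + m) by ring] at ha'
    rw [show -1 - m - b = -1 - (b + m) by ring] at hb'
    refine sum_amp_nonneg hi hik hj hjk (τ := fun u => u) (σ := fun u => -1 - (u + m))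
      (a := a) (b := b) (fun _ _ h => h) (fun _ _ h => by simpa using h) ?_ ?_ hab
      ⟨ha, ha'⟩ ⟨hb, hb'⟩
    all_goals
      unfold Frame at *
      rw [Finset.mem_Ico]
      omega
  · exact Finset.sum_nonneg fun u _ =>
      amp_mul_amp_nonneg hi hik hj hjk (by omega) (by omega)

theorem sum_reverse_amp_shift_nonneg {k i j m : ℤ} (hi : 1 ≤ i) (hik : i ≤ k) (hj : 1 ≤ j)
    (hjk : j ≤ k) (hm : m ≠ 0) :
    0 ≤ ∑ u ∈ Ico (-(9 * k + 21)) (9 * k + 21), amp k i (-1 - u) * amp k j (u + m) := by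
  refine (sum_amp_reverse_shift_nonneg (m := -m) hi hik hj hjk (by omega)).trans_eq ?_
  refine Finset.sum_nbij' (fun u => -1 - u) (fun u => -1 - u) ?_ ?_ ?_ ?_ ?_
  · intro u hu
    rw [Finset.mem_Ico] at hu ⊢
    omega
  · intro u hu
    rw [Finset.mem_Ico] at hu ⊢
    omega
  · intro u _
    ring
  · intro u _
    ring
  · intro u _
    congr 2 <;> ring

theorem amp_mul_amp_reverse {k i j : ℤ} (hi : 1 ≤ i) (hik : i ≤ k) (hj : 1 ≤ j) (hjk : j ≤ k)
    (u : ℤ) : amp k i u * amp k j (-1 - u) =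
      if i = j then (if u = -i then -1 else 0) + (if u = i - 1 then -1 else 0) else 0 := by
  have hF : Frame k u → ¬ Frame k (-1 - u) ∧ (u < -k ∨ k ≤ u) := by unfold Frame; omega
  have hF' : Frame k (-1 - u) → u < -k ∨ k ≤ u := by unfold Frame; omega
  unfold amp
  by_cases h : Frame k u <;> by_cases h' : Frame k (-1 - u) <;>
    simp only [h, h', or_true, or_false, if_true] <;> simp only [h, h', true_imp_iff] at hF hF' <;>
    split_ifs <;> first | rfl | omega | simp_all

theorem sum_amp_reverse {k i j : ℤ} (hi : 1 ≤ i) (hik : i ≤ k) (hj : 1 ≤ j) (hjk : j ≤ k) :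
    ∑ u ∈ Ico (-(9 * k + 21)) (9 * k + 21), amp k i u * amp k j (-1 - u) =
      if i = j then -2 else 0 := by
  rw [Finset.sum_congr rfl fun u _ => amp_mul_amp_reverse hi hik hj hjk u]
  split_ifs with h
  · rw [Finset.sum_add_distrib, Finset.sum_ite_eq', Finset.sum_ite_eq',
      if_pos (Finset.mem_Ico.2 (by omega)), if_pos (Finset.mem_Ico.2 (by omega))]
    norm_num
  · simp

theorem force_map_range (n : ℕ) (F G : ℕ → Dip) :
    force ((List.range n).map F) ((List.range n).map G) =
      -∑ x ∈ Finset.range n, val (F x) * val (G x) := by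
  rw [force, List.zipWith_map, List.zipWith_self, ← Finset.sum_neg_distrib]
  simp_rw [lf_eq_neg_val_mul]
  rfl

theorem force_comm (X Y : List Dip) : force X Y = force Y X := by
  rw [force, force, List.zipWith_comm]
  congr 2
  funext x y
  rw [lf_eq_neg_val_mul, lf_eq_neg_val_mul, mul_comm]

theorem take_map_range {i n : ℕ} (h : i ≤ n) (F : ℕ → Dip) :
    ((List.range n).map F).take i = (List.range i).map F := by
  rw [← List.map_take, List.take_range, min_eq_left h]

theorem sufx_map_range (i m : ℕ) (F : ℕ → Dip) :
    sufx ((List.range (i + m)).map F) i = (List.range i).map fun x => F (x + m) := by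
  unfold sufx
  apply List.ext_getElem
  · simp
  · intro x _ _
    simp [add_comm]

theorem reverse_map_range (n : ℕ) (F : ℕ → Dip) :
    ((List.range n).map F).reverse = (List.range n).map fun x => F (n - 1 - x) := by
  apply List.ext_getElem
  · simp
  · intro x _ _
    simp

/-- The `i`-th word of the code. -/
def word (k i : ℕ) : List Dip :=
  (List.range (18 * k + 42)).map fun x : ℕ => letter k i ((x : ℤ) - (9 * k + 21))

theorem word_reverse (k i : ℕ) :
    (word k i).reverse =
      (List.range (18 * k + 42)).map fun x : ℕ => letter k i (-1 - ((x : ℤ) - (9 * k + 21))) := by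
  rw [word, reverse_map_range]
  refine List.map_congr_left fun x hx => ?_
  rw [List.mem_range] at hx
  congr 1
  omega

/-- A sum over list positions is a sum over centred positions. -/
theorem sum_range_eq_sum_Ico (k i : ℕ) (hi : i ≤ 18 * k + 42) (φ : ℤ → ℤ)
    (hφ : ∀ u : ℤ, (i : ℤ) - (9 * k + 21) ≤ u → φ u = 0) :
    ∑ x ∈ Finset.range i, φ ((x : ℤ) - (9 * k + 21)) =
      ∑ u ∈ Ico (-(9 * (k : ℤ) + 21)) (9 * k + 21), φ u := by
  have hinj : Set.InjOn (fun x : ℕ => (x : ℤ) - (9 * k + 21)) (Finset.range i) := by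
    intro x _ y _ h
    simpa using h
  rw [← Finset.sum_image (f := φ) hinj]
  refine Finset.sum_subset ?_ fun u hu hu' => hφ u ?_
  · intro u hu
    obtain ⟨x, hx, rfl⟩ := Finset.mem_image.1 hu
    rw [Finset.mem_range] at hx
    rw [Finset.mem_Ico]
    omega
  · by_contra! hlt
    rw [Finset.mem_Ico] at hu
    refine hu' (Finset.mem_image.2 ⟨(u + (9 * k + 21)).toNat, ?_, ?_⟩)
    · rw [Finset.mem_range]
      omega
    · omega

/-- The force between a prefix and a suffix of words with letters given by centred positions. -/
theorem force_take_sufx (k i m : ℕ) (him : i + m = 18 * k + 42) (F G : ℤ → Dip)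
    (hG : ∀ u : ℤ, 9 * (k : ℤ) + 21 ≤ u → val (G u) = 0) :
    force
      (((List.range (18 * k + 42)).map fun x : ℕ => F ((x : ℤ) - (9 * k + 21))).take i)
      (sufx ((List.range (18 * k + 42)).map fun x : ℕ => G ((x : ℤ) - (9 * k + 21))) i) =
      -∑ u ∈ Ico (-(9 * (k : ℤ) + 21)) (9 * k + 21), val (F u) * val (G (u + m)) := by
  rw [take_map_range (by omega), ← him, sufx_map_range, force_map_range,
    ← sum_range_eq_sum_Ico k i (by omega) (fun u => val (F u) * val (G (u + m)))]
  · congr 1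
    refine Finset.sum_congr rfl fun x _ => ?_
    congr 3
    push_cast
    ring
  · intro u hu
    rw [hG _ (by omega), mul_zero]

theorem force_full (k : ℕ) (F G : ℤ → Dip) :
    force ((List.range (18 * k + 42)).map fun x : ℕ => F ((x : ℤ) - (9 * k + 21)))
      ((List.range (18 * k + 42)).map fun x : ℕ => G ((x : ℤ) - (9 * k + 21))) =
      -∑ u ∈ Ico (-(9 * (k : ℤ) + 21)) (9 * k + 21), val (F u) * val (G u) := by
  rw [force_map_range]
  congr 1
  have hinj : Set.InjOn (fun x : ℕ => (x : ℤ) - (9 * k + 21)) (Finset.range (18 * k + 42)) := by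
    intro x _ y _ h
    simpa using h
  have himg : Ico (-(9 * (k : ℤ) + 21)) (9 * k + 21) =
      (Finset.range (18 * k + 42)).image fun x : ℕ => (x : ℤ) - (9 * k + 21) := by
    ext u
    simp only [Finset.mem_Ico, Finset.mem_image, Finset.mem_range]
    constructor
    · intro h
      exact ⟨(u + (9 * k + 21)).toNat, by omega⟩
    · rintro ⟨x, hx, rfl⟩
      omega
  rw [himg, Finset.sum_image hinj]

theorem val_letter_eq_zero {k i : ℕ} (hi : 1 ≤ i) (hik : i ≤ k) {u : ℤ}
    (hu : u < -(9 * (k : ℤ) + 21) ∨ 9 * (k : ℤ) + 21 ≤ u) : val (letter k i u) = 0 := by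
  rw [val_letter, amp_eq_zero (by omega) (by omega) (by omega)]

theorem aligned_word {k i j : ℕ} (hi : 1 ≤ i) (hik : i ≤ k) (hj : 1 ≤ j) (hjk : j ≤ k) :
    aligned (word k i) (word k j) := by
  have hi' : (1 : ℤ) ≤ i := by exact_mod_cast hi
  have hj' : (1 : ℤ) ≤ j := by exact_mod_cast hj
  have hik' : (i : ℤ) ≤ k := by exact_mod_cast hik
  have hjk' : (j : ℤ) ≤ k := by exact_mod_cast hjk
  refine ⟨?_, ?_⟩
  · rw [word, word, force_full k (letter k i) (letter k j)]
    simp_rw [val_letter]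
    simpa using sum_amp_shift_nonneg (m := 0) hi' hik' hj' hjk' le_rfl
  intro A hA l hl hl'
  have hlen : (word k i).length = 18 * k + 42 := by simp [word]
  rw [hlen] at hl'
  obtain ⟨m, hm⟩ : ∃ m, l + m = 18 * k + 42 := ⟨18 * k + 42 - l, by omega⟩
  have hm0 : (m : ℤ) ≠ 0 := by omega
  rw [force_comm (sufx _ _)]
  have hzi : ∀ u : ℤ, 9 * (k : ℤ) + 21 ≤ u → val (letter k i u) = 0 :=
    fun u hu => val_letter_eq_zero hi hik (.inr hu)
  have hzj : ∀ u : ℤ, 9 * (k : ℤ) + 21 ≤ u → val (letter k j u) = 0 :=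
    fun u hu => val_letter_eq_zero hj hjk (.inr hu)
  simp only [List.mem_cons, List.not_mem_nil, or_false] at hA
  rcases hA with rfl | rfl
  · rw [word, word, force_take_sufx k l m hm (letter k i) (letter k j) hzj,
      force_take_sufx k l m hm (letter k j) (letter k i) hzi]
    simp_rw [val_letter, neg_nonpos]
    exact ⟨sum_amp_shift_nonneg hi' hik' hj' hjk' (by omega),
      sum_amp_shift_nonneg hj' hjk' hi' hik' (by omega)⟩
  · rw [word_reverse, word,
      force_take_sufx k l m hm (letter k i) (fun u => letter k j (-1 - u))
        fun u hu => val_letter_eq_zero hj hjk (.inl (by omega)),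
      force_take_sufx k l m hm (fun u => letter k j (-1 - u)) (letter k i) hzi]
    simp_rw [val_letter, neg_nonpos]
    exact ⟨sum_amp_reverse_shift_nonneg hi' hik' hj' hjk' hm0,
      sum_reverse_amp_shift_nonneg hj' hjk' hi' hik' hm0⟩

theorem force_word_reverse {k i j : ℕ} (hi : 1 ≤ i) (hik : i ≤ k) (hj : 1 ≤ j) (hjk : j ≤ k) :
    force (word k i) (word k j).reverse = if i = j then 2 else 0 := by
  rw [word_reverse, word, force_full k (letter k i) (fun u => letter k j (-1 - u))]
  simp_rw [val_letter]
  rw [sum_amp_reverse (by omega) (by omega) (by omega) (by omega)]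
  simp only [Nat.cast_inj]
  split_ifs <;> rfl

end DipoleCode

/-- For every positive integer `k`, there is a set of `k` dipole words, each of length
`18k+42`, that attractively encodes the canonical unsigned `k`-glue function. -/
theorem stmt1 (k : ℕ) (hk : 0 < k) :
    ∃ W : ℕ → List Dip,
      (∀ i ∈ Finset.Icc 1 k, (W i).length = 18 * k + 42) ∧
      attEncodes k W unsignedGlue := by
  refine ⟨DipoleCode.word k, fun i _ => by simp [DipoleCode.word], ?_, ?_⟩
  · intro i hi j hj
    rw [Finset.mem_Icc] at hi hj
    exact DipoleCode.aligned_word hi.1 hi.2 hj.1 hj.2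
  · intro i hi j hj
    rw [Finset.mem_Icc] at hi hj
    rw [DipoleCode.force_word_reverse hi.1 hi.2 hj.1 hj.2, unsignedGlue]
    split_ifs <;> norm_num
end

section
/- For every positive integer k and every k-glue function g whose bond graph is bipartite, there exists a set of k dipole words, each of length 3k+14, that attractively encodes g. -/
open Dip

/-- The charge of a letter; the force of two letters is minus the product of their charges. -/
def charge : Dip → ℤ
  | zero => 1
  | one => -1
  | blank => 0

theorem lf_eq_neg_charge_mul (a b : Dip) : lf a b = -(charge a * charge b) := by
  cases a <;> cases b <;> rfl

/-- The word of length `n` read off a bi-infinite sequence of letters at positions `0, …, n - 1`. -/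
def word (n : ℕ) (x : ℤ → Dip) : List Dip := (List.range n).map fun t : ℕ => x t

theorem length_word (n : ℕ) (x : ℤ → Dip) : (word n x).length = n := by simp [word]

theorem reverse_word (n : ℕ) (x : ℤ → Dip) :
    (word n x).reverse = word n fun t => x (n - 1 - t) := by
  refine List.ext_getElem (by simp [word]) fun m h₁ h₂ => ?_
  have hm : m < n := by simpa [word] using h₂
  simp only [word, List.getElem_reverse, List.getElem_map, List.getElem_range, List.length_map,
    List.length_range]
  congr 1
  omega

theorem take_word {n i : ℕ} (hi : i ≤ n) (x : ℤ → Dip) : (word n x).take i = word i x := by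
  simp [word, ← List.map_take, List.take_range, hi]

theorem sufx_word {n i : ℕ} (hi : i ≤ n) (x : ℤ → Dip) :
    sufx (word n x) i = word i fun t => x (n - i + t) := by
  refine List.ext_getElem (by simp [word, sufx]; omega) fun m h₁ h₂ => ?_
  simp only [word, sufx, List.getElem_drop, List.getElem_map, List.getElem_range, List.length_map,
    List.length_range]
  congr 1
  omega

theorem force_word (n : ℕ) (x y : ℤ → Dip) :
    force (word n x) (word n y) = -∑ t ∈ Finset.Ico (0 : ℤ) n, charge (x t) * charge (y t) := by
  have key : force (word n x) (word n y) =
      -∑ t ∈ Finset.range n, charge (x t) * charge (y t) := by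
    induction n with
    | zero => simp [force, word]
    | succ n ih =>
      rw [Finset.sum_range_succ, neg_add, ← ih]
      simp [force, word, List.range_succ, List.zipWith_append, lf_eq_neg_charge_mul]
  rw [key]
  congr 1
  refine Finset.sum_nbij (fun t : ℕ => (t : ℤ)) ?_ ?_ ?_ ?_
  · intro t; simp
  · intro a _ b _; simp
  · intro t ht
    simp only [Finset.coe_Ico, Set.mem_Ico] at ht
    exact ⟨t.toNat, by simp; omega, by simp; omega⟩
  · simp

/-- Correlation of two sequences over the window `[0, n)` at shift `s`. -/
noncomputable def corr (n : ℕ) (x y : ℤ → Dip) (s : ℤ) : ℤ :=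
  ∑ t ∈ Finset.Ico (0 : ℤ) n, charge (x t) * charge (y (s + t))

/-- Convolution of two sequences over the window `[0, n)` at `s`. -/
noncomputable def conv (n : ℕ) (x y : ℤ → Dip) (s : ℤ) : ℤ :=
  ∑ t ∈ Finset.Ico (0 : ℤ) n, charge (x t) * charge (y (s - t))

/-- A sequence that is blank outside the window `[0, n)`. -/
def Supported (n : ℕ) (x : ℤ → Dip) : Prop := ∀ t : ℤ, t < 0 ∨ n ≤ t → charge (x t) = 0

theorem force_take_sufx {n i : ℕ} (hi : i ≤ n) (x : ℤ → Dip) {y : ℤ → Dip}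
    (hy : Supported n y) :
    force ((word n x).take i) (sufx (word n y) i) = -corr n x y (n - i) := by
  rw [take_word hi, sufx_word hi, force_word, corr]
  congr 1
  refine Finset.sum_subset (Finset.Ico_subset_Ico_right (by omega)) fun t ht ht' => ?_
  simp only [Finset.mem_Ico] at ht ht'
  rw [hy _ (by omega), mul_zero]

theorem force_comm (X Y : List Dip) : force X Y = force Y X := by
  unfold force
  rw [List.zipWith_comm]
  congr 2
  funext a b
  rw [lf_eq_neg_charge_mul, lf_eq_neg_charge_mul, mul_comm]

theorem force_take_sufx_reverse {n i : ℕ} (hi : i ≤ n) (x : ℤ → Dip) {y : ℤ → Dip}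
    (hy : Supported n y) :
    force ((word n x).take i) (sufx (word n y).reverse i) = -conv n x y (i - 1) := by
  rw [take_word hi, reverse_word, sufx_word hi, force_word, conv]
  congr 1
  rw [← Finset.sum_subset (Finset.Ico_subset_Ico_right (by omega : (i : ℤ) ≤ n))]
  · refine Finset.sum_congr rfl fun t _ => ?_
    congr 3
    ring
  · intro t ht ht'
    simp only [Finset.mem_Ico] at ht ht'
    rw [hy _ (by omega), mul_zero]

theorem force_sufx_take_reverse {n i : ℕ} (hi : i ≤ n) (x : ℤ → Dip) {y : ℤ → Dip}
    (hy : Supported n y) :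
    force (sufx (word n x) i) ((word n y).reverse.take i) = -conv n x y (2 * n - 1 - i) := by
  rw [sufx_word hi, reverse_word, take_word hi, force_word, conv]
  congr 1
  refine Eq.trans ?_
    (Finset.sum_subset (Finset.Ico_subset_Ico_left (by omega : (0 : ℤ) ≤ n - i)) ?_)
  · refine Finset.sum_nbij (fun t => n - i + t) ?_ ?_ ?_ ?_
    · intro t; simp only [Finset.mem_Ico]; omega
    · intro a _ b _; simp
    · intro t ht
      simp only [Finset.coe_Ico, Set.mem_Ico] at ht
      exact ⟨t - (n - i), by simp; omega, by simp⟩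
    · intro t _
      congr 3
      ring
  · intro t ht ht'
    simp only [Finset.mem_Ico] at ht ht'
    rw [hy _ (by omega), mul_zero]

theorem aligned_word {n : ℕ} {x y : ℤ → Dip} (hx : Supported n x) (hy : Supported n y)
    (hxy : ∀ s, 0 ≤ s → 0 ≤ corr n x y s) (hyx : ∀ s, 0 ≤ s → 0 ≤ corr n y x s)
    (hconv : ∀ s : ℤ, s ≠ n - 1 → 0 ≤ conv n x y s) : aligned (word n x) (word n y) := by
  refine ⟨?_, fun A hA i hi hin => ?_⟩
  · have h := hxy 0 le_rfl
    simp only [corr, zero_add] at h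
    rw [force_word]
    omega
  · rw [length_word] at hin
    have hin' : i ≤ n := by omega
    simp only [List.mem_cons, List.not_mem_nil, or_false] at hA
    rcases hA with rfl | rfl
    · rw [force_take_sufx hin' x hy, force_comm, force_take_sufx hin' y hx]
      have h₁ := hxy (n - i) (by omega)
      have h₂ := hyx (n - i) (by omega)
      omega
    · rw [force_take_sufx_reverse hin' x hy, force_sufx_take_reverse hin' x hy]
      have h₁ := hconv (i - 1) (by omega)
      have h₂ := hconv (2 * n - 1 - i) (by omega)
      omega

theorem force_word_reverse (n : ℕ) (x y : ℤ → Dip) :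
    force (word n x) (word n y).reverse = -conv n x y (n - 1) := by
  rw [reverse_word, force_word, conv]

theorem sum_nonneg_of_one_bad {ι : Type*} [DecidableEq ι] {T : Finset ι} {f : ι → ℤ} (b : ι)
    {p : ι} (hp : p ∈ T) (hpb : p ≠ b) (hfp : 1 ≤ f p) (hfb : -1 ≤ f b)
    (hf : ∀ t ∈ T, t ≠ b → 0 ≤ f t) : 0 ≤ ∑ t ∈ T, f t := by
  have h : ∑ t ∈ T, ((if t = p then 1 else 0) - (if t = b then 1 else 0) : ℤ) ≤ ∑ t ∈ T, f t := by
    refine Finset.sum_le_sum fun t ht => ?_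
    have := hf t ht
    split_ifs <;> simp_all
  refine le_trans ?_ h
  rw [Finset.sum_sub_distrib, Finset.sum_ite_eq', Finset.sum_ite_eq', if_pos hp]
  split_ifs <;> simp

theorem sum_nonneg_of_two_bad {ι : Type*} [DecidableEq ι] {T : Finset ι} {f : ι → ℤ} (b c : ι)
    {p q : ι} (hp : p ∈ T) (hq : q ∈ T) (hpq : p ≠ q) (hfp : 1 ≤ f p) (hfq : 1 ≤ f q)
    (hfb : -1 ≤ f b) (hfc : -1 ≤ f c) (hf : ∀ t ∈ T, t ≠ b → t ≠ c → 0 ≤ f t) :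
    0 ≤ ∑ t ∈ T, f t := by
  have h : ∑ t ∈ T, ((if t = p then 1 else 0) + (if t = q then 1 else 0)
      - (if t = b then 1 else 0) - (if t = c then 1 else 0) : ℤ) ≤ ∑ t ∈ T, f t := by
    refine Finset.sum_le_sum fun t ht => ?_
    have := hf t ht
    split_ifs <;> grind
  refine le_trans ?_ h
  rw [Finset.sum_sub_distrib, Finset.sum_sub_distrib, Finset.sum_add_distrib, Finset.sum_ite_eq',
    Finset.sum_ite_eq', Finset.sum_ite_eq', Finset.sum_ite_eq', if_pos hp, if_pos hq]
  split_ifs <;> simp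

/-- The word of a vertex `i` in one colour class: three letters `0`, the position of the last
one being determined by `i`. -/
def probe (k i : ℕ) (t : ℤ) : Dip :=
  if t = k + 10 ∨ t = 2 * k + 13 ∨ t = 2 * k + 13 + i then zero else blank

open Classical in
/-- The word of a vertex with neighbourhood `E` in the other colour class: one slot for each
vertex, which is blank for the neighbours, a blank, and two runs of `0` separated by a `1`. -/
noncomputable def panel (k : ℕ) (E : ℤ → Prop) (t : ℤ) : Dip :=
  if t < 0 ∨ t = k ∨ 3 * k + 14 ≤ t then blank
  else if t = 2 * k + 3 then one
  else if t < k ∧ E (k - t) then blank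
  else zero

theorem supported_probe {k i : ℕ} (hi : i ≤ k) : Supported (3 * k + 14) (probe k i) := by
  intro t ht
  rw [probe, if_neg (by push_cast at ht; omega), charge]

theorem supported_panel (k : ℕ) (E : ℤ → Prop) : Supported (3 * k + 14) (panel k E) := by
  intro t ht
  rw [panel, if_pos (by push_cast at ht; omega), charge]

theorem charge_probe_nonneg (k i : ℕ) (t : ℤ) : 0 ≤ charge (probe k i t) := by
  rw [probe]
  split_ifs <;> simp [charge]

theorem charge_probe_of_mem {k i : ℕ} {t : ℤ}
    (ht : t = k + 10 ∨ t = 2 * k + 13 ∨ t = 2 * k + 13 + i) : charge (probe k i t) = 1 := by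
  rw [probe, if_pos ht, charge]

theorem charge_probe_of_not_mem {k i : ℕ} {t : ℤ}
    (ht : ¬(t = k + 10 ∨ t = 2 * k + 13 ∨ t = 2 * k + 13 + i)) : charge (probe k i t) = 0 := by
  rw [probe, if_neg ht, charge]

theorem charge_panel_center (k : ℕ) (E : ℤ → Prop) : charge (panel k E (2 * k + 3)) = -1 := by
  rw [panel, if_neg (by omega), if_pos rfl, charge]

theorem charge_panel_nonneg (k : ℕ) (E : ℤ → Prop) {t : ℤ} (ht : t ≠ 2 * k + 3) :
    0 ≤ charge (panel k E t) := by
  rw [panel, if_neg ht]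
  split_ifs <;> simp [charge]

theorem charge_panel_le_one (k : ℕ) (E : ℤ → Prop) (t : ℤ) : charge (panel k E t) ≤ 1 := by
  cases panel k E t <;> simp [charge]

theorem charge_panel_run (k : ℕ) (E : ℤ → Prop) {t : ℤ} (h₁ : k < t) (h₂ : t < 3 * k + 14)
    (ht : t ≠ 2 * k + 3) : charge (panel k E t) = 1 := by
  rw [panel, if_neg (by omega), if_neg ht, if_neg (by omega), charge]

theorem corr_probe_probe_nonneg (n k i j : ℕ) (s : ℤ) : 0 ≤ corr n (probe k i) (probe k j) s :=
  Finset.sum_nonneg fun _ _ => mul_nonneg (charge_probe_nonneg ..) (charge_probe_nonneg ..)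

theorem conv_probe_probe_nonneg (n k i j : ℕ) (s : ℤ) : 0 ≤ conv n (probe k i) (probe k j) s :=
  Finset.sum_nonneg fun _ _ => mul_nonneg (charge_probe_nonneg ..) (charge_probe_nonneg ..)

/-- A nonnegativity criterion for sums of products of a probe and a panel, along injective
reparametrizations `u` and `v` of the positions. -/
theorem sum_probe_mul_panel_nonneg {k i : ℕ} (E : ℤ → Prop) {T : Finset ℤ} {u v : ℤ → ℤ}
    (b : ℤ) (hb : ∀ t, v t = 2 * k + 3 → t = b)
    (hgood : charge (probe k i (u b)) = 1 → v b = 2 * k + 3 →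
      ∃ p ∈ T, charge (probe k i (u p)) = 1 ∧ charge (panel k E (v p)) = 1) :
    0 ≤ ∑ t ∈ T, charge (probe k i (u t)) * charge (panel k E (v t)) := by
  have hpos : ∀ t, t ≠ b → 0 ≤ charge (probe k i (u t)) * charge (panel k E (v t)) := fun t ht =>
    mul_nonneg (charge_probe_nonneg ..) (charge_panel_nonneg _ _ fun h => ht (hb t h))
  by_cases h₁ : v b = 2 * k + 3
  · by_cases h₂ : u b = k + 10 ∨ u b = 2 * k + 13 ∨ u b = 2 * k + 13 + i
    · obtain ⟨p, hpT, hp₁, hp₂⟩ := hgood (charge_probe_of_mem h₂) h₁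
      refine sum_nonneg_of_one_bad b hpT ?_ (by rw [hp₁, hp₂]; rfl) ?_ fun t _ => hpos t
      · rintro rfl
        rw [h₁, charge_panel_center] at hp₂
        omega
      · rw [h₁, charge_panel_center, charge_probe_of_mem h₂]
        rfl
    · refine Finset.sum_nonneg fun t _ => ?_
      by_cases ht : t = b
      · rw [ht, charge_probe_of_not_mem h₂, zero_mul]
      · exact hpos t ht
  · exact Finset.sum_nonneg fun t _ =>
      mul_nonneg (charge_probe_nonneg ..)
        (charge_panel_nonneg _ _ fun h => h₁ (by rwa [← hb t h]))

theorem mem_of_charge_probe {k i : ℕ} {t : ℤ} (h : charge (probe k i t) = 1) :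
    t = k + 10 ∨ t = 2 * k + 13 ∨ t = 2 * k + 13 + i := by
  by_contra hn
  rw [charge_probe_of_not_mem hn] at h
  omega

theorem corr_probe_panel_nonneg {k i : ℕ} (hi₁ : 1 ≤ i) (hi : i ≤ k) (E : ℤ → Prop) (s : ℤ) :
    0 ≤ corr (3 * k + 14) (probe k i) (panel k E) s := by
  refine sum_probe_mul_panel_nonneg (u := fun t => t) (v := fun t => s + t) E (2 * k + 3 - s)
    (fun t ht => by omega) fun h _ => ?_
  rcases mem_of_charge_probe h with h | h | h
  · exact ⟨2 * k + 13, by simp; omega, charge_probe_of_mem (by omega),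
      charge_panel_run _ _ (by omega) (by omega) (by omega)⟩
  · exact ⟨2 * k + 13 + i, by simp; omega, charge_probe_of_mem (by omega),
      charge_panel_run _ _ (by omega) (by omega) (by omega)⟩
  · exact ⟨2 * k + 13, by simp; omega, charge_probe_of_mem (by omega),
      charge_panel_run _ _ (by omega) (by omega) (by omega)⟩

theorem corr_panel_probe_nonneg {k i : ℕ} (hi₁ : 1 ≤ i) (hi : i ≤ k) (E : ℤ → Prop) (s : ℤ) :
    0 ≤ corr (3 * k + 14) (panel k E) (probe k i) s := by
  simp only [corr, mul_comm (charge (panel _ _ _))]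
  refine sum_probe_mul_panel_nonneg (u := fun t => s + t) (v := fun t => t) E (2 * k + 3)
    (fun t ht => ht) fun h _ => ?_
  rcases mem_of_charge_probe h with h | h | h
  · exact ⟨2 * k + 13 - s, by simp; omega, charge_probe_of_mem (by omega),
      charge_panel_run _ _ (by omega) (by omega) (by omega)⟩
  · exact ⟨2 * k + 13 + i - s, by simp; omega, charge_probe_of_mem (by omega),
      charge_panel_run _ _ (by omega) (by omega) (by omega)⟩
  · exact ⟨2 * k + 13 - s, by simp; omega, charge_probe_of_mem (by omega),
      charge_panel_run _ _ (by omega) (by omega) (by omega)⟩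

theorem conv_comm {n : ℕ} {x y : ℤ → Dip} (hx : Supported n x) (hy : Supported n y) (s : ℤ) :
    conv n x y s = conv n y x s := by
  have h : ∀ {x y : ℤ → Dip}, Supported n y → conv n x y s =
      ∑ t ∈ Finset.Ico (0 : ℤ) n with 0 ≤ s - t ∧ s - t < n, charge (x t) * charge (y (s - t)) := by
    intro x y hy
    rw [Finset.sum_filter, conv]
    refine Finset.sum_congr rfl fun t _ => ?_
    split_ifs with ht
    · rfl
    · rw [hy _ (by omega), mul_zero]
  rw [h hy, h hx]
  refine Finset.sum_nbij' (fun t => s - t) (fun t => s - t) ?_ ?_ ?_ ?_ ?_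
  · intro t; simp; omega
  · intro t; simp; omega
  · simp
  · simp
  · intro t _
    rw [sub_sub_cancel, mul_comm]

theorem conv_probe_panel_nonneg {k i : ℕ} (hi₁ : 1 ≤ i) (hi : i ≤ k) (E : ℤ → Prop) {s : ℤ}
    (hs : s ≠ 3 * k + 13 ∨ ¬E i) : 0 ≤ conv (3 * k + 14) (probe k i) (panel k E) s := by
  refine sum_probe_mul_panel_nonneg (u := fun t => t) (v := fun t => s - t) E (s - (2 * k + 3))
    (fun t ht => by omega) fun h _ => ?_
  rcases mem_of_charge_probe h with h | h | h
  · refine ⟨2 * k + 13 + i, by simp; omega, charge_probe_of_mem (by omega), ?_⟩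
    have hE : ¬E i := hs.resolve_left (by omega)
    rw [show s - (2 * k + 13 + i) = (k - i : ℤ) by omega, panel, if_neg (by omega),
      if_neg (by omega), if_neg (by rw [sub_sub_cancel]; tauto), charge]
  · exact ⟨k + 10, by simp; omega, charge_probe_of_mem (by omega),
      charge_panel_run _ _ (by omega) (by omega) (by omega)⟩
  · exact ⟨2 * k + 13, by simp; omega, charge_probe_of_mem (by omega),
      charge_panel_run _ _ (by omega) (by omega) (by omega)⟩

theorem conv_probe_panel_neg {k i : ℕ} (hi₁ : 1 ≤ i) (hi : i ≤ k) {E : ℤ → Prop} (hE : E i) :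
    conv (3 * k + 14) (probe k i) (panel k E) (3 * k + 13) < 0 := by
  refine Finset.sum_neg' (fun t _ => ?_) ⟨k + 10, by simp; omega, ?_⟩
  · by_cases ht : t = k + 10 ∨ t = 2 * k + 13 ∨ t = 2 * k + 13 + i
    · rw [charge_probe_of_mem ht, one_mul]
      rcases ht with rfl | rfl | rfl
      · rw [show (3 * k + 13 - (k + 10) : ℤ) = 2 * k + 3 by ring, charge_panel_center]
        omega
      · rw [panel, if_pos (by omega), charge]
      · rw [show (3 * k + 13 - (2 * k + 13 + i) : ℤ) = k - i by ring, panel, if_neg (by omega),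
          if_neg (by omega), if_pos ⟨by omega, by rwa [sub_sub_cancel]⟩, charge]
    · rw [charge_probe_of_not_mem ht, zero_mul]
  · rw [show (3 * k + 13 - (k + 10) : ℤ) = 2 * k + 3 by ring, charge_panel_center,
      charge_probe_of_mem (by omega)]
    omega

/-- A nonnegativity criterion for sums of products of two panels, along injective
reparametrizations of the positions. -/
theorem sum_panel_mul_panel_nonneg {k : ℕ} (E F : ℤ → Prop) {T : Finset ℤ} {v : ℤ → ℤ}
    (b : ℤ) (hb : ∀ t, v t = 2 * k + 3 ↔ t = b)
    (hgood : b ≠ 2 * k + 3 →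
      (0 ≤ v (2 * k + 3) ∧ v (2 * k + 3) < 3 * k + 14 ∨ 0 ≤ b ∧ b < 3 * k + 14) →
      ∃ p ∈ T, ∃ q ∈ T, p ≠ q ∧
        ((k < p ∧ p < 3 * k + 14 ∧ p ≠ 2 * k + 3) ∧
          (k < v p ∧ v p < 3 * k + 14 ∧ v p ≠ 2 * k + 3)) ∧
        ((k < q ∧ q < 3 * k + 14 ∧ q ≠ 2 * k + 3) ∧
          (k < v q ∧ v q < 3 * k + 14 ∧ v q ≠ 2 * k + 3))) :
    0 ≤ ∑ t ∈ T, charge (panel k E t) * charge (panel k F (v t)) := by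
  have hpos : ∀ t : ℤ, t ≠ 2 * k + 3 → t ≠ b →
      0 ≤ charge (panel k E t) * charge (panel k F (v t)) := fun t h₁ h₂ =>
    mul_nonneg (charge_panel_nonneg _ _ h₁) (charge_panel_nonneg _ _ fun h => h₂ ((hb t).1 h))
  have hvb : v b = 2 * k + 3 := (hb b).2 rfl
  by_cases hbc : b = 2 * k + 3
  · refine Finset.sum_nonneg fun t _ => ?_
    by_cases ht : t = 2 * k + 3
    · rw [ht, ← hbc, hvb, hbc, charge_panel_center, charge_panel_center]
      omega
    · exact hpos t ht (by rwa [hbc])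
  by_cases hr : 0 ≤ v (2 * k + 3) ∧ v (2 * k + 3) < 3 * k + 14 ∨ 0 ≤ b ∧ b < 3 * k + 14
  · obtain ⟨p, hp, q, hq, hpq, ⟨hp₁, hp₂⟩, hq₁, hq₂⟩ := hgood hbc hr
    refine sum_nonneg_of_two_bad (2 * k + 3) b hp hq hpq ?_ ?_ ?_ ?_ fun t _ => hpos t
    · rw [charge_panel_run _ _ hp₁.1 hp₁.2.1 hp₁.2.2, charge_panel_run _ _ hp₂.1 hp₂.2.1 hp₂.2.2]
      rfl
    · rw [charge_panel_run _ _ hq₁.1 hq₁.2.1 hq₁.2.2, charge_panel_run _ _ hq₂.1 hq₂.2.1 hq₂.2.2]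
      rfl
    · rw [charge_panel_center]
      linarith [charge_panel_le_one k F (v (2 * k + 3))]
    · rw [hvb, charge_panel_center]
      linarith [charge_panel_le_one k E b]
  · refine Finset.sum_nonneg fun t _ => ?_
    by_cases ht : t = 2 * k + 3
    · rw [ht, supported_panel k F _ (by push_cast; omega), mul_zero]
    by_cases ht' : t = b
    · rw [ht', supported_panel k E _ (by push_cast; omega), zero_mul]
    exact hpos t ht ht'

theorem corr_panel_panel_nonneg (k : ℕ) (E F : ℤ → Prop) {s : ℤ} (hs : 0 ≤ s) :
    0 ≤ corr (3 * k + 14) (panel k E) (panel k F) s := by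
  refine sum_panel_mul_panel_nonneg E F (2 * k + 3 - s) (fun t => by omega) fun h hr => ?_
  by_cases h₁ : s ≤ k + 8
  · exact ⟨2 * k + 4, by simp; omega, 2 * k + 5, by simp; omega, by omega, by omega, by omega⟩
  by_cases h₂ : s = k + 9
  · exact ⟨2 * k + 1, by simp; omega, 2 * k + 2, by simp; omega, by omega, by omega, by omega⟩
  · exact ⟨k + 1, by simp; omega, k + 2, by simp; omega, by omega, by omega, by omega⟩

theorem conv_panel_panel_nonneg {k : ℕ} (hk : 0 < k) (E F : ℤ → Prop) (s : ℤ) :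
    0 ≤ conv (3 * k + 14) (panel k E) (panel k F) s := by
  refine sum_panel_mul_panel_nonneg E F (s - (2 * k + 3)) (fun t => by omega) fun h hr => ?_
  have key : ∀ p : ℤ, p ≠ s - p → (k < p ∧ p < 3 * k + 14 ∧ p ≠ 2 * k + 3) →
      (k < s - p ∧ s - p < 3 * k + 14 ∧ s - p ≠ 2 * k + 3) →
      ∃ p ∈ Finset.Ico (0 : ℤ) (3 * k + 14 : ℕ), ∃ q ∈ Finset.Ico (0 : ℤ) (3 * k + 14 : ℕ), p ≠ q ∧
        ((k < p ∧ p < 3 * k + 14 ∧ p ≠ 2 * k + 3) ∧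
          (k < s - p ∧ s - p < 3 * k + 14 ∧ s - p ≠ 2 * k + 3)) ∧
        ((k < q ∧ q < 3 * k + 14 ∧ q ≠ 2 * k + 3) ∧
          (k < s - q ∧ s - q < 3 * k + 14 ∧ s - q ≠ 2 * k + 3)) := fun p h₁ h₂ h₃ =>
    ⟨p, by simp; omega, s - p, by simp; omega, h₁, ⟨h₂, h₃⟩, h₃, by rwa [sub_sub_cancel]⟩
  by_cases h₁ : s = 5 * k + 16
  · exact key (2 * k + 4) (by omega) (by omega) (by omega)
  by_cases h₂ : 4 * k + 6 < s
  · exact key (2 * k + 2) (by omega) (by omega) (by omega)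
  by_cases h₃ : 3 * k + 5 ≤ s
  · exact key (2 * k + 4) (by omega) (by omega) (by omega)
  by_cases h₄ : s = 3 * k + 4
  · exact key (2 * k + 2) (by omega) (by omega) (by omega)
  · exact key (k + 1) (by omega) (by omega) (by omega)

/-- For every `k`-glue function `g` whose bond graph is bipartite, there is a set of `k`
dipole words, each of length `3k+14`, that attractively encodes `g`. -/
theorem stmt2 (k : ℕ) (hk : 0 < k) (g : ℕ → ℕ → ℤ)
    (hsym : ∀ i ∈ Finset.Icc 1 k, ∀ j ∈ Finset.Icc 1 k, g i j = g j i)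
    (hbip : ∃ S : Finset ℕ, ∀ i ∈ Finset.Icc 1 k, ∀ j ∈ Finset.Icc 1 k,
      0 < g i j → ¬(i ∈ S ↔ j ∈ S)) :
    ∃ W : ℕ → List Dip,
      (∀ i ∈ Finset.Icc 1 k, (W i).length = 3 * k + 14) ∧
      attEncodes k W g := by
  obtain ⟨S, hS⟩ := hbip
  let E : ℕ → ℤ → Prop := fun j t => 0 < g t.toNat j
  let x : ℕ → ℤ → Dip := fun i => if i ∈ S then probe k i else panel k (E i)
  have hxS : ∀ i, i ∈ S → x i = probe k i := fun i hi => if_pos hi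
  have hxS' : ∀ i, i ∉ S → x i = panel k (E i) := fun i hi => if_neg hi
  have hsupp : ∀ i ∈ Finset.Icc 1 k, Supported (3 * k + 14) (x i) := by
    intro i hi
    by_cases h : i ∈ S
    · rw [hxS i h]
      exact supported_probe (Finset.mem_Icc.1 hi).2
    · rw [hxS' i h]
      exact supported_panel k _
  have hcorr : ∀ i ∈ Finset.Icc 1 k, ∀ j ∈ Finset.Icc 1 k, ∀ s, 0 ≤ s →
      0 ≤ corr (3 * k + 14) (x i) (x j) s := by
    intro i hi j hj s hs
    rw [Finset.mem_Icc] at hi hj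
    by_cases h : i ∈ S <;> by_cases h' : j ∈ S
    · rw [hxS i h, hxS j h']
      exact corr_probe_probe_nonneg ..
    · rw [hxS i h, hxS' j h']
      exact corr_probe_panel_nonneg hi.1 hi.2 _ s
    · rw [hxS' i h, hxS j h']
      exact corr_panel_probe_nonneg hj.1 hj.2 _ s
    · rw [hxS' i h, hxS' j h']
      exact corr_panel_panel_nonneg k _ _ hs
  have hconv : ∀ i ∈ Finset.Icc 1 k, ∀ j ∈ Finset.Icc 1 k, ∀ s : ℤ,
      s ≠ 3 * k + 13 ∨ ¬0 < g i j → 0 ≤ conv (3 * k + 14) (x i) (x j) s := by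
    intro i hi j hj s hs
    have hi' := Finset.mem_Icc.1 hi
    have hj' := Finset.mem_Icc.1 hj
    by_cases h : i ∈ S <;> by_cases h' : j ∈ S
    · rw [hxS i h, hxS j h']
      exact conv_probe_probe_nonneg ..
    · rw [hxS i h, hxS' j h']
      exact conv_probe_panel_nonneg hi'.1 hi'.2 _ (by simpa [E] using hs)
    · rw [conv_comm (hsupp i hi) (hsupp j hj), hxS' i h, hxS j h']
      exact conv_probe_panel_nonneg hj'.1 hj'.2 _ (by simpa [E, hsym i hi j hj] using hs)
    · rw [hxS' i h, hxS' j h']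
      exact conv_panel_panel_nonneg hk _ _ s
  have hneg : ∀ i ∈ Finset.Icc 1 k, ∀ j ∈ Finset.Icc 1 k, 0 < g i j →
      conv (3 * k + 14) (x i) (x j) (3 * k + 13) < 0 := by
    intro i hi j hj hg
    have hi' := Finset.mem_Icc.1 hi
    have hj' := Finset.mem_Icc.1 hj
    have hne := hS i hi j hj hg
    by_cases h : i ∈ S <;> by_cases h' : j ∈ S
    · tauto
    · rw [hxS i h, hxS' j h']
      exact conv_probe_panel_neg hi'.1 hi'.2 (by simpa [E] using hg)
    · rw [conv_comm (hsupp i hi) (hsupp j hj), hxS' i h, hxS j h']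
      exact conv_probe_panel_neg hj'.1 hj'.2 (by simpa [E, hsym i hi j hj] using hg)
    · tauto
  have hcenter : ((3 * k + 14 : ℕ) : ℤ) - 1 = 3 * k + 13 := by push_cast; ring
  refine ⟨fun i => word (3 * k + 14) (x i), fun i _ => length_word _ _, fun i hi j hj => ?_,
    fun i hi j hj => ?_⟩
  · refine aligned_word (hsupp i hi) (hsupp j hj) (hcorr i hi j hj) (hcorr j hj i hi) fun s hs => ?_
    exact hconv i hi j hj s (Or.inl (by rwa [hcenter] at hs))
  · rw [force_word_reverse, hcenter, neg_pos]
    refine ⟨fun h => ?_, hneg i hi j hj⟩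
    by_contra hg
    exact absurd (hconv i hi j hj _ (Or.inr hg)) (not_le.2 h)
end

section
/- There exists a constant c > 0 such that for every integer k ≥ 2 there exists a set of k dipole words of common length at most c·log₂(k) that attractively encodes the canonical unsigned k-glue function. -/
open Dip

/-- Position of the code letter carrying bit `q` of `i`. -/
def codePos (n i q : ℕ) : ℤ := 40 * n + 4 * q + 1 + (if i.testBit q then 1 else 0)

/-- Indicator of the code positions of `i`, all of which lie in `[40n, 44n)`. -/
def code (n i : ℕ) (t : ℤ) : ℤ := ∑ q ∈ Finset.range n, if t = codePos n i q then 1 else 0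

/-- Indicator of `[0, 60n)` minus the slots reserved for code letters. -/
def base (n : ℕ) (t : ℤ) : ℤ :=
  if (0 ≤ t ∧ t < 40 * n) ∨ (44 * n ≤ t ∧ t < 60 * n) ∨
    (40 * n ≤ t ∧ t < 44 * n ∧ (t % 4 = 0 ∨ t % 4 = 3)) then 1 else 0

/-- Indicator of a run of length `n - 1` whose mirror image lies in the initial run of `base`. -/
def run (n : ℕ) (t : ℤ) : ℤ := if 84 * n ≤ t ∧ t < 85 * n - 1 then 1 else 0

/-- The word of `i` as a `{-1, 0, 1}`-valued function supported on `[0, 120n)`: negative code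
letters inside `base`, positive code letters at the mirrored positions, and `run`. -/
def wordVal (n i : ℕ) (t : ℤ) : ℤ :=
  base n t - code n i t + code n i (120 * n - 1 - t) + run n t

lemma codePos_bounds (n i q : ℕ) :
    40 * (n : ℤ) + 4 * q + 1 ≤ codePos n i q ∧ codePos n i q ≤ 40 * n + 4 * q + 2 := by
  unfold codePos; split_ifs <;> omega

lemma code_cases (n i : ℕ) (t : ℤ) :
    (∃ q < n, t = codePos n i q ∧ code n i t = 1) ∨
      ((∀ q < n, t ≠ codePos n i q) ∧ code n i t = 0) := by
  by_cases h : ∃ q < n, t = codePos n i q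
  · obtain ⟨q, hq, rfl⟩ := h
    refine Or.inl ⟨q, hq, rfl, ?_⟩
    rw [code, Finset.sum_eq_single q]
    · simp
    · intro b _ hb
      have h1 := codePos_bounds n i q
      have h2 := codePos_bounds n i b
      rw [if_neg]; omega
    · simp [hq]
  · push Not at h
    refine Or.inr ⟨h, Finset.sum_eq_zero fun q hq => if_neg (h q (Finset.mem_range.1 hq))⟩

lemma code_nonneg (n i : ℕ) (t : ℤ) : 0 ≤ code n i t := by
  rcases code_cases n i t with ⟨_, _, _, h⟩ | ⟨_, h⟩ <;> omega

lemma code_le_one (n i : ℕ) (t : ℤ) : code n i t ≤ 1 := by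
  rcases code_cases n i t with ⟨_, _, _, h⟩ | ⟨_, h⟩ <;> omega

lemma code_eq_zero {n i : ℕ} {t : ℤ} (h : t ≤ 40 * n ∨ 44 * n - 1 ≤ t) : code n i t = 0 := by
  rcases code_cases n i t with ⟨q, hq, ht, _⟩ | ⟨_, h⟩
  · have := codePos_bounds n i q
    omega
  · exact h

lemma base_nonneg (n : ℕ) (t : ℤ) : 0 ≤ base n t := by unfold base; split_ifs <;> simp

lemma base_le_one (n : ℕ) (t : ℤ) : base n t ≤ 1 := by unfold base; split_ifs <;> simp

lemma base_eq_zero {n : ℕ} {t : ℤ} (h : t < 0 ∨ 60 * n ≤ t) : base n t = 0 := by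
  unfold base; rw [if_neg]; omega

lemma base_eq_one {n : ℕ} {t : ℤ} (h : (0 ≤ t ∧ t < 40 * n) ∨ (44 * n ≤ t ∧ t < 60 * n)) :
    base n t = 1 := by
  unfold base; rw [if_pos]; omega

lemma base_codePos {n i q : ℕ} (hq : q < n) : base n (codePos n i q) = 0 := by
  have := codePos_bounds n i q
  unfold base; rw [if_neg]; omega

lemma run_nonneg (n : ℕ) (t : ℤ) : 0 ≤ run n t := by unfold run; split_ifs <;> simp

lemma run_eq_zero {n : ℕ} {t : ℤ} (h : t < 84 * n ∨ 85 * n - 1 ≤ t) : run n t = 0 := by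
  unfold run; rw [if_neg]; omega

lemma wordVal_mem (n i : ℕ) (t : ℤ) :
    wordVal n i t = -1 ∨ wordVal n i t = 0 ∨ wordVal n i t = 1 := by
  have h1 := code_nonneg n i t
  have h2 := code_le_one n i t
  have h3 := code_nonneg n i (120 * n - 1 - t)
  have h4 := code_le_one n i (120 * n - 1 - t)
  have h5 := base_nonneg n t
  have h6 := base_le_one n t
  unfold wordVal
  by_cases ht : t < 60 * n
  · rw [run_eq_zero (by omega), code_eq_zero (t := 120 * n - 1 - t) (by omega)]
    omega
  · rw [base_eq_zero (by omega), code_eq_zero (t := t) (by omega)]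
    by_cases ht' : t < 84 * n
    · rw [run_eq_zero (by omega)]
      omega
    · rw [code_eq_zero (t := 120 * n - 1 - t) (by omega)]
      unfold run; split_ifs <;> omega

lemma wordVal_eq_zero {n i : ℕ} {t : ℤ} (h : t < 0 ∨ 120 * n ≤ t) : wordVal n i t = 0 := by
  unfold wordVal
  rw [base_eq_zero (by omega), run_eq_zero (by omega), code_eq_zero (by omega),
    code_eq_zero (by omega)]
  simp

/-- Reindexing a correlation sum of finitely supported functions. -/
lemma sum_mul_comp_swap (s : Finset ℤ) (f g : ℤ → ℤ) (σ τ : ℤ → ℤ)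
    (hτσ : ∀ t, τ (σ t) = t) (hστ : ∀ t, σ (τ t) = t)
    (hf : ∀ t ∉ s, f t = 0) (hg : ∀ t ∉ s, g t = 0) :
    ∑ t ∈ s, f t * g (σ t) = ∑ t ∈ s, g t * f (τ t) := by
  rw [← Finset.sum_filter_of_ne (p := fun t => σ t ∈ s),
    ← Finset.sum_filter_of_ne (s := s) (f := fun t => g t * f (τ t)) (p := fun t => τ t ∈ s)]
  · refine Finset.sum_nbij' σ τ ?_ ?_ ?_ ?_ ?_
    · intro t ht; simp only [Finset.mem_filter] at ht ⊢; simp [hτσ, ht]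
    · intro t ht; simp only [Finset.mem_filter] at ht ⊢; simp [hστ, ht]
    · intro t _; exact hτσ t
    · intro t _; exact hστ t
    · intro t _; rw [hτσ, mul_comm]
  · intro t _ h; by_contra h'; exact h (by rw [hf _ h', mul_zero])
  · intro t _ h; by_contra h'; exact h (by rw [hg _ h', mul_zero])

lemma sum_code_mul (n i : ℕ) (f : ℤ → ℤ) :
    ∑ t ∈ Finset.Ico (0 : ℤ) (120 * n), code n i t * f t =
      ∑ q ∈ Finset.range n, f (codePos n i q) := by
  simp only [code, Finset.sum_mul]
  rw [Finset.sum_comm]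
  refine Finset.sum_congr rfl fun q hq => ?_
  have := codePos_bounds n i q
  have := Finset.mem_range.1 hq
  rw [Finset.sum_eq_single (codePos n i q)]
  · simp
  · intro b _ hb; simp [hb]
  · intro h; exact absurd (Finset.mem_Ico.2 (by omega)) h

/-- A sum over an integer interval as a sum over a range. -/
lemma sum_Ico_eq_sum_range_of_support (a l : ℤ) (m : ℕ) (ha : 0 ≤ a) (hl : a + m ≤ l)
    (f : ℤ → ℤ) (hf : ∀ t, 0 ≤ t → t < l → t < a ∨ a + m ≤ t → f t = 0) :
    ∑ t ∈ Finset.Ico 0 l, f t = ∑ t ∈ Finset.range m, f (a + t) := by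
  have h1 : ∑ t ∈ Finset.Ico a (a + m), f t = ∑ t ∈ Finset.Ico 0 l, f t := by
    refine Finset.sum_subset (Finset.Ico_subset_Ico ha hl) fun t ht ht' => ?_
    simp only [Finset.mem_Ico] at ht ht'
    exact hf t ht.1 ht.2 (by omega)
  rw [← h1]
  symm
  refine Finset.sum_nbij' (fun t : ℕ => a + (t : ℤ)) (fun t => (t - a).toNat) ?_ ?_ ?_ ?_ ?_
  · intro t ht; simp only [Finset.mem_range, Finset.mem_Ico] at ht ⊢; omega
  · intro t ht; simp only [Finset.mem_range, Finset.mem_Ico] at ht ⊢; omega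
  · intro t _; simp
  · intro t ht; simp only [Finset.mem_Ico] at ht; simp; omega
  · intro t _; rfl

lemma sum_run_mul (r : ℕ) (f : ℤ → ℤ) :
    ∑ t ∈ Finset.Ico (0 : ℤ) (120 * (3 * r + 1 : ℕ)), run (3 * r + 1) t * f t =
      ∑ t ∈ Finset.range (3 * r), f (84 * (3 * r + 1 : ℕ) + t) := by
  rw [sum_Ico_eq_sum_range_of_support (84 * (3 * r + 1 : ℕ)) _ (3 * r) (by omega) (by omega)]
  · refine Finset.sum_congr rfl fun t ht => ?_
    have := Finset.mem_range.1 ht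
    rw [run, if_pos (by omega), one_mul]
  · intro t _ _ h
    rw [run_eq_zero (by omega), zero_mul]

lemma base_sub_code_window (n i : ℕ) (a : ℤ) :
    0 ≤ (base n a - code n i a) + (base n (a + 1) - code n i (a + 1)) +
      (base n (a + 2) - code n i (a + 2)) := by
  have key : ∀ q, q < n →
      base n (40 * n + 4 * q) = 1 ∧ base n (40 * n + 4 * q + 3) = 1 := by
    intro q hq
    constructor <;> (unfold base; rw [if_pos]; omega)
  have b0 := base_nonneg n a
  have b1 := base_nonneg n (a + 1)
  have b2 := base_nonneg n (a + 2)
  rcases code_cases n i a with ⟨q, hq, ht, hc⟩ | ⟨_, hc⟩ <;>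
  rcases code_cases n i (a + 1) with ⟨q', hq', ht', hc'⟩ | ⟨_, hc'⟩ <;>
  rcases code_cases n i (a + 2) with ⟨q'', hq'', ht'', hc''⟩ | ⟨_, hc''⟩ <;>
  rw [hc, hc', hc'']
  · have := codePos_bounds n i q
    have := codePos_bounds n i q'
    have := codePos_bounds n i q''
    obtain rfl : q = q' := by omega
    omega
  · have := codePos_bounds n i q
    have := codePos_bounds n i q'
    obtain rfl : q = q' := by omega
    omega
  · have := codePos_bounds n i q
    have := codePos_bounds n i q''
    omega
  · have := codePos_bounds n i q
    obtain ⟨h0, h3⟩ := key q hq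
    obtain h | h : a + 1 = 40 * n + 4 * q + 3 ∨ a + 2 = 40 * n + 4 * q + 3 := by omega
    · rw [← h] at h3; omega
    · rw [← h] at h3; omega
  · have := codePos_bounds n i q'
    have := codePos_bounds n i q''
    obtain rfl : q' = q'' := by omega
    omega
  · have := codePos_bounds n i q'
    obtain ⟨h0, h3⟩ := key q' hq'
    obtain h | h : a = 40 * n + 4 * q' ∨ a + 2 = 40 * n + 4 * q' + 3 := by omega
    · rw [← h] at h0; omega
    · rw [← h] at h3; omega
  · have := codePos_bounds n i q''
    obtain ⟨h0, h3⟩ := key q'' hq''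
    obtain h | h : a = 40 * n + 4 * q'' ∨ a + 1 = 40 * n + 4 * q'' := by omega
    · rw [← h] at h0; omega
    · rw [← h] at h0; omega
  · omega

lemma sum_window_nonneg (n i r : ℕ) (a : ℤ) :
    0 ≤ ∑ t ∈ Finset.range (3 * r), (base n (a + t) - code n i (a + t)) := by
  induction r with
  | zero => simp
  | succ r ih =>
    rw [show 3 * (r + 1) = 3 * r + 1 + 1 + 1 by ring, Finset.sum_range_succ,
      Finset.sum_range_succ, Finset.sum_range_succ]
    have := base_sub_code_window n i (a + (3 * r : ℕ))
    push_cast at this ih ⊢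
    simp only [← add_assoc] at this ⊢
    linarith

lemma sum_window_reflect_nonneg (n i r : ℕ) (a : ℤ) :
    0 ≤ ∑ t ∈ Finset.range (3 * r), (base n (a - t) - code n i (a - t)) := by
  refine (sum_window_nonneg n i r (a - (3 * r : ℕ) + 1)).trans_eq ?_
  rw [← Finset.sum_range_reflect]
  refine Finset.sum_congr rfl fun t ht => ?_
  have := Finset.mem_range.1 ht
  rw [show a - (3 * r : ℕ) + 1 + (3 * r - 1 - t : ℕ) = a - t by omega]

/-- Lower bound for a correlation of two words under an invertible change of position. -/
lemma corr_lower_bound (r i j : ℕ) (σ τ : ℤ → ℤ)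
    (hτσ : ∀ t, τ (σ t) = t) (hστ : ∀ t, σ (τ t) = t) (n : ℕ) (hn : n = 3 * r + 1) :
    ∑ t ∈ Finset.Ico (0 : ℤ) (120 * n), base n t * base n (σ t)
      - ∑ q ∈ Finset.range n, (base n (τ (codePos n j q)) + base n (σ (codePos n i q)))
      - ∑ q ∈ Finset.range n, (code n i (120 * n - 1 - τ (codePos n j q))
          + code n j (120 * n - 1 - σ (codePos n i q)))
      + ∑ t ∈ Finset.range (3 * r), (base n (σ (84 * n + t)) - code n j (σ (84 * n + t)))
      + ∑ t ∈ Finset.range (3 * r), (base n (τ (84 * n + t)) - code n i (τ (84 * n + t)))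
    ≤ ∑ t ∈ Finset.Ico (0 : ℤ) (120 * n), wordVal n i t * wordVal n j (σ t) := by
  have hB : ∀ t ∉ Finset.Ico (0 : ℤ) (120 * n), base n t = 0 := fun t ht =>
    base_eq_zero (by simp only [Finset.mem_Ico] at ht; omega)
  have hC : ∀ i, ∀ t ∉ Finset.Ico (0 : ℤ) (120 * n), code n i t = 0 := fun i t ht =>
    code_eq_zero (by simp only [Finset.mem_Ico] at ht; omega)
  have hU : ∀ i, ∀ t ∉ Finset.Ico (0 : ℤ) (120 * n), code n i (120 * n - 1 - t) = 0 :=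
    fun i t ht => code_eq_zero (by simp only [Finset.mem_Ico] at ht; omega)
  have hG : ∀ t ∉ Finset.Ico (0 : ℤ) (120 * n), run n t = 0 := fun t ht =>
    run_eq_zero (by simp only [Finset.mem_Ico] at ht; omega)
  have hR : ∀ t ∉ Finset.Ico (0 : ℤ) (120 * n), base n t - code n i t = 0 := fun t ht => by
    rw [hB t ht, hC i t ht, sub_zero]
  have e1 := sum_mul_comp_swap _ (base n) (code n j) σ τ hτσ hστ hB (hC j)
  have e2 := sum_mul_comp_swap _ (fun t => code n i (120 * n - 1 - t)) (code n j) σ τ hτσ hστ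
    (hU i) (hC j)
  have e3 := sum_mul_comp_swap _ (fun t => base n t - code n i t) (run n) σ τ hτσ hστ hR hG
  rw [sum_code_mul n j (fun t => base n (τ t))] at e1
  rw [sum_code_mul n j (fun t => code n i (120 * n - 1 - τ t))] at e2
  have e4 := sum_code_mul n i (fun t => base n (σ t))
  have e5 := sum_code_mul n i (fun t => code n j (120 * n - 1 - σ t))
  have e6 := sum_run_mul r (fun t => base n (σ t) - code n j (σ t))
  have e7 := sum_run_mul r (fun t => base n (τ t) - code n i (τ t))
  rw [← hn] at e6 e7
  rw [e7] at e3
  rw [Finset.sum_add_distrib, Finset.sum_add_distrib, ← e1, ← e2, ← e3, ← e4, ← e5, ← e6,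
    ← Finset.sum_add_distrib, ← Finset.sum_add_distrib, ← Finset.sum_sub_distrib,
    ← Finset.sum_sub_distrib, ← Finset.sum_add_distrib, ← Finset.sum_add_distrib]
  refine Finset.sum_le_sum fun t _ => ?_
  unfold wordVal
  have c1 := code_nonneg n i t
  have c2 := code_nonneg n j (σ t)
  have c3 := code_nonneg n i (120 * n - 1 - t)
  have c4 := code_nonneg n j (120 * n - 1 - σ t)
  have c5 := base_nonneg n t
  have c6 := base_nonneg n (σ t)
  have c7 := run_nonneg n t
  have c8 := run_nonneg n (σ t)
  have d1 := mul_nonneg c1 c2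
  have d2 := mul_nonneg (add_nonneg c3 c7) (add_nonneg c4 c8)
  have d3 := mul_nonneg c3 c6
  have d4 := mul_nonneg c5 c4
  linarith

/-- If `base` and `base ∘ σ` are both one along an interval, their correlation is at least its
length. -/
lemma le_sum_base_mul (n m : ℕ) (σ : ℤ → ℤ) (a : ℤ) (ha : 0 ≤ a) (hl : a + m ≤ 120 * n)
    (h1 : ∀ t, a ≤ t → t < a + m → base n t = 1 ∧ base n (σ t) = 1) :
    (m : ℤ) ≤ ∑ t ∈ Finset.Ico (0 : ℤ) (120 * n), base n t * base n (σ t) := by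
  calc (m : ℤ) = ∑ t ∈ Finset.Ico a (a + m), base n t * base n (σ t) := by
        rw [Finset.sum_congr rfl (g := fun _ => (1 : ℤ))]
        · simp
        · intro t ht
          obtain ⟨h, h'⟩ := h1 t (Finset.mem_Ico.1 ht).1 (Finset.mem_Ico.1 ht).2
          rw [h, h', one_mul]
    _ ≤ _ := Finset.sum_le_sum_of_subset_of_nonneg (Finset.Ico_subset_Ico ha hl)
        fun t _ _ => mul_nonneg (base_nonneg _ _) (base_nonneg _ _)

lemma sum_base_mul_nonneg (n : ℕ) (σ : ℤ → ℤ) :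
    0 ≤ ∑ t ∈ Finset.Ico (0 : ℤ) (120 * n), base n t * base n (σ t) :=
  Finset.sum_nonneg fun _ _ => mul_nonneg (base_nonneg _ _) (base_nonneg _ _)

lemma sum_range_add_le (n : ℕ) (f g : ℕ → ℤ) (hf : ∀ q, f q ≤ 1) (hg : ∀ q, g q ≤ 1) :
    ∑ q ∈ Finset.range n, (f q + g q) ≤ 2 * n := by
  refine (Finset.sum_le_card_nsmul _ _ 2 fun q _ => by linarith [hf q, hg q]).trans ?_
  simp [mul_comm]

/-- Correlations of unreversed words are nonnegative. -/
lemma corr_shift_nonneg (r n i j : ℕ) (hn : n = 3 * r + 1) (s : ℤ) (hs : 0 ≤ s) :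
    0 ≤ ∑ t ∈ Finset.Ico (0 : ℤ) (120 * n), wordVal n i t * wordVal n j (t + s) := by
  refine le_trans ?_ (corr_lower_bound r i j (fun t => t + s) (fun t => t - s)
    (by intro t; ring) (by intro t; ring) n hn)
  have g1 := sum_window_nonneg n j r (84 * n + s)
  have g2 := sum_window_nonneg n i r (84 * n - s)
  simp only [add_right_comm _ s, sub_add_eq_add_sub] at g1 g2 ⊢
  by_cases h : s < 44 * n
  · have h1 := sum_range_add_le n (fun q => base n (codePos n j q - s))
      (fun q => base n (codePos n i q + s)) (fun _ => base_le_one _ _) (fun _ => base_le_one _ _)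
    have h2 := sum_range_add_le n (fun q => code n i (120 * n - 1 - (codePos n j q - s)))
      (fun q => code n j (120 * n - 1 - (codePos n i q + s)))
      (fun _ => code_le_one _ _ _) (fun _ => code_le_one _ _ _)
    have h3 : ((4 * n : ℕ) : ℤ) ≤
        ∑ t ∈ Finset.Ico (0 : ℤ) (120 * n), base n t * base n (t + s) := by
      by_cases h' : s < 36 * n
      · refine le_sum_base_mul n (4 * n) (fun t => t + s) 0 le_rfl (by omega) fun t _ _ =>
          ⟨base_eq_one (by omega), base_eq_one (by omega)⟩
      · refine le_sum_base_mul n (4 * n) (fun t => t + s) (8 * n) (by omega) (by omega)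
          fun t _ _ => ⟨base_eq_one (by omega), base_eq_one (by omega)⟩
    push_cast at h3
    linarith
  · have h3 := sum_base_mul_nonneg n (fun t => t + s)
    have h1 : ∑ q ∈ Finset.range n, (base n (codePos n j q - s) + base n (codePos n i q + s))
        = 0 := Finset.sum_eq_zero fun q hq => by
      have := codePos_bounds n i q
      have := codePos_bounds n j q
      have := Finset.mem_range.1 hq
      rw [base_eq_zero (by omega), base_eq_zero (by omega), add_zero]
    have h2 : ∑ q ∈ Finset.range n, (code n i (120 * n - 1 - (codePos n j q - s)) +
        code n j (120 * n - 1 - (codePos n i q + s))) = 0 := Finset.sum_eq_zero fun q hq => by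
      have := codePos_bounds n i q
      have := codePos_bounds n j q
      have := Finset.mem_range.1 hq
      rw [code_eq_zero (by omega), code_eq_zero (by omega), add_zero]
    rw [h1, h2]
    linarith

lemma sum_base_reflect_le (n i j : ℕ) (c : ℤ) :
    ∑ q ∈ Finset.range n, (base n (c - codePos n j q) + base n (c - codePos n i q)) ≤
      ∑ t ∈ Finset.Ico (0 : ℤ) (120 * n), base n t * base n (c - t) := by
  by_cases h : c < 40 * n ∨ 104 * n ≤ c
  · refine (Finset.sum_eq_zero fun q hq => ?_).trans_le (sum_base_mul_nonneg n fun t => c - t)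
    have := codePos_bounds n i q
    have := codePos_bounds n j q
    have := Finset.mem_range.1 hq
    rw [base_eq_zero (by omega), base_eq_zero (by omega), add_zero]
  · have h1 := sum_range_add_le n (fun q => base n (c - codePos n j q))
      (fun q => base n (c - codePos n i q)) (fun _ => base_le_one _ _) (fun _ => base_le_one _ _)
    refine h1.trans ?_
    have key : ∃ a : ℤ, 0 ≤ a ∧ a + (2 * n : ℕ) ≤ 120 * n ∧ ∀ t, a ≤ t → t < a + (2 * n : ℕ) →
        base n t = 1 ∧ base n (c - t) = 1 := by
      by_cases c1 : c < 78 * n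
      · exact ⟨38 * n, by omega, by omega, fun t _ _ =>
          ⟨base_eq_one (by omega), base_eq_one (by omega)⟩⟩
      by_cases c2 : c < 84 * n
      · exact ⟨44 * n, by omega, by omega, fun t _ _ =>
          ⟨base_eq_one (by omega), base_eq_one (by omega)⟩⟩
      by_cases c3 : c < 98 * n
      · exact ⟨58 * n, by omega, by omega, fun t _ _ =>
          ⟨base_eq_one (by omega), base_eq_one (by omega)⟩⟩
      · exact ⟨50 * n, by omega, by omega, fun t _ _ =>
          ⟨base_eq_one (by omega), base_eq_one (by omega)⟩⟩
    obtain ⟨a, ha, hl, hab⟩ := key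
    have := le_sum_base_mul n (2 * n) (fun t => c - t) a ha hl hab
    push_cast at this
    exact this

/-- A sum of terms at most two, one of which vanishes. -/
lemma sum_range_le_of_exists {n q₀ : ℕ} (f : ℕ → ℤ) (hq₀ : q₀ < n) (h0 : f q₀ ≤ 0)
    (hf : ∀ q, f q ≤ 2) : ∑ q ∈ Finset.range n, f q ≤ 2 * n - 2 := by
  rw [← Finset.add_sum_erase _ _ (Finset.mem_range.2 hq₀)]
  have := Finset.sum_le_card_nsmul ((Finset.range n).erase q₀) f 2 fun q _ => hf q
  rw [Finset.card_erase_of_mem (Finset.mem_range.2 hq₀), Finset.card_range, nsmul_eq_mul] at this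
  push_cast [Nat.cast_sub (show 1 ≤ n by omega)] at this
  linarith

/-- Two distinct shifted codes never match completely. -/
lemma sum_code_shift_le (n i j : ℕ) (hn : 2 ≤ n) (s : ℤ)
    (h : s ≠ 0 ∨ ∃ q < n, i.testBit q ≠ j.testBit q) :
    ∑ q ∈ Finset.range n, (code n i (codePos n j q + s) + code n j (codePos n i q + s)) ≤
      2 * n - 2 := by
  have two : ∀ q, code n i (codePos n j q + s) + code n j (codePos n i q + s) ≤ 2 := fun q => by
    linarith [code_le_one n i (codePos n j q + s), code_le_one n j (codePos n i q + s)]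
  by_cases s0 : s = 0
  · obtain ⟨q, hq, hij⟩ := h.resolve_left (by simp [s0])
    refine sum_range_le_of_exists _ hq ?_ two
    subst s0
    have aux : ∀ a b : ℕ, a.testBit q ≠ b.testBit q → code n a (codePos n b q + 0) = 0 := by
      intro a b hab
      rcases code_cases n a (codePos n b q + 0) with ⟨q', hq', h', _⟩ | ⟨_, h'⟩
      · have := codePos_bounds n a q'
        have := codePos_bounds n b q
        obtain rfl : q' = q := by omega
        unfold codePos at h'
        cases ha : a.testBit q' <;> cases hb : b.testBit q' <;> simp_all
      · exact h'
    rw [aux i j hij, aux j i hij.symm, add_zero]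
  by_cases s1 : 2 ≤ s
  · refine sum_range_le_of_exists _ (show n - 1 < n by omega) ?_ two
    have := codePos_bounds n i (n - 1)
    have := codePos_bounds n j (n - 1)
    rw [code_eq_zero (by omega), code_eq_zero (by omega), add_zero]
  by_cases s2 : s ≤ -2
  · refine sum_range_le_of_exists _ (show 0 < n by omega) ?_ two
    have := codePos_bounds n i 0
    have := codePos_bounds n j 0
    rw [code_eq_zero (by omega), code_eq_zero (by omega), add_zero]
  have one : ∀ q, code n i (codePos n j q + s) + code n j (codePos n i q + s) ≤ 1 := by
    intro q
    have b1 := codePos_bounds n i q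
    have b2 := codePos_bounds n j q
    rcases code_cases n i (codePos n j q + s) with ⟨q', _, h', e⟩ | ⟨_, e⟩ <;>
      rcases code_cases n j (codePos n i q + s) with ⟨q'', _, h'', e'⟩ | ⟨_, e'⟩ <;>
      rw [e, e'] <;> try omega
    have := codePos_bounds n i q'
    have := codePos_bounds n j q''
    obtain rfl : q' = q := by omega
    obtain rfl : q'' = q' := by omega
    omega
  have := Finset.sum_le_card_nsmul (Finset.range n) _ 1 fun q _ => one q
  simp at this
  linarith [show (2 : ℤ) ≤ n by exact_mod_cast hn]

/-- Correlations of a word with a reversed word are nonnegative, except possibly for the word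
itself in central position. -/
lemma corr_reflect_nonneg (r n i j : ℕ) (hn : n = 3 * r + 1) (hr : 1 ≤ r) (s : ℤ)
    (h : s ≠ 0 ∨ ∃ q < n, i.testBit q ≠ j.testBit q) :
    0 ≤ ∑ t ∈ Finset.Ico (0 : ℤ) (120 * n),
      wordVal n i t * wordVal n j (120 * n - 1 + s - t) := by
  refine le_trans ?_ (corr_lower_bound r i j (fun t => 120 * n - 1 + s - t)
    (fun t => 120 * n - 1 + s - t) (by intro t; ring) (by intro t; ring) n hn)
  have h1 := sum_base_reflect_le n i j (120 * n - 1 + s)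
  have e : ∀ t : ℤ, 120 * (n : ℤ) - 1 + s - (84 * n + t) = 36 * n - 1 + s - t := by
    intros; ring
  have e' : ∀ t : ℤ, 120 * (n : ℤ) - 1 - (120 * n - 1 + s - t) = t + -s := by intros; ring
  simp only [e, e']
  by_cases hs : -(4 * n) < s ∧ s < 4 * n
  · have h2 := sum_code_shift_le n i j (by omega) (-s) (h.imp_left (by simp))
    have g : ∀ a : ℕ, ∑ t ∈ Finset.range (3 * r),
        (base n (36 * n - 1 + s - t) - code n a (36 * n - 1 + s - t)) = 3 * r := by
      intro a
      rw [Finset.sum_congr rfl (g := fun _ => (1 : ℤ))]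
      · simp
      · intro t ht
        have := Finset.mem_range.1 ht
        rw [base_eq_one (by omega), code_eq_zero (by omega), sub_zero]
    rw [g, g]
    have : (n : ℤ) = 3 * r + 1 := by exact_mod_cast hn
    linarith
  · have g1 := sum_window_reflect_nonneg n i r (36 * n - 1 + s)
    have g2 := sum_window_reflect_nonneg n j r (36 * n - 1 + s)
    have h2 : ∑ q ∈ Finset.range n,
        (code n i (codePos n j q + -s) + code n j (codePos n i q + -s)) = 0 :=
      Finset.sum_eq_zero fun q hq => by
        have := codePos_bounds n i q
        have := codePos_bounds n j q
        have := Finset.mem_range.1 hq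
        rw [code_eq_zero (by omega), code_eq_zero (by omega), add_zero]
    rw [h2]
    linarith

/-- A word attracts its own reversal. -/
lemma corr_reflect_self_neg (r n i : ℕ) (hn : n = 3 * r + 1) :
    ∑ t ∈ Finset.Ico (0 : ℤ) (120 * n), wordVal n i t * wordVal n i (120 * n - 1 - t) < 0 := by
  have pointwise : ∀ t : ℤ, wordVal n i t * wordVal n i (120 * n - 1 - t) =
      run n t * 1 + run n (120 * n - 1 - t) - code n i t * 1 - code n i (120 * n - 1 - t) := by
    have half : ∀ t : ℤ, t < 60 * n → wordVal n i t * wordVal n i (120 * n - 1 - t) =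
        run n t * 1 + run n (120 * n - 1 - t) - code n i t * 1
          - code n i (120 * n - 1 - t) := by
      intro t ht
      unfold wordVal
      rw [sub_sub_cancel, run_eq_zero (t := t) (by omega),
        code_eq_zero (t := 120 * n - 1 - t) (by omega),
        base_eq_zero (t := 120 * n - 1 - t) (by omega)]
      by_cases h : 40 * n ≤ t
      · rw [run_eq_zero (by omega)]
        rcases code_cases n i t with ⟨q, hq, rfl, hc⟩ | ⟨_, hc⟩
        · rw [hc, base_codePos hq]; norm_num
        · rw [hc]; norm_num
      · rw [code_eq_zero (t := t) (by omega)]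
        by_cases h0 : 0 ≤ t
        · rw [base_eq_one (by omega)]; ring
        · rw [base_eq_zero (by omega), run_eq_zero (by omega)]; ring
    intro t
    by_cases ht : t < 60 * n
    · exact half t ht
    · have := half (120 * n - 1 - t) (by omega)
      rw [sub_sub_cancel] at this
      linarith
  have reflect : ∀ f : ℤ → ℤ, ∑ t ∈ Finset.Ico (0 : ℤ) (120 * n), f (120 * n - 1 - t) =
      ∑ t ∈ Finset.Ico (0 : ℤ) (120 * n), f t * 1 := by
    intro f
    refine Finset.sum_nbij' (fun t => 120 * n - 1 - t) (fun t => 120 * n - 1 - t)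
      ?_ ?_ ?_ ?_ ?_ <;> intro t ht <;> simp only [Finset.mem_Ico] at * <;> omega
  rw [Finset.sum_congr rfl fun t _ => pointwise t]
  simp only [Finset.sum_sub_distrib, Finset.sum_add_distrib]
  rw [reflect, reflect, sum_code_mul n i fun _ => 1]
  have := sum_run_mul r fun _ => 1
  rw [← hn] at this
  rw [this]
  simp
  omega

/-- The letter of a given charge. -/
def letterOf (z : ℤ) : Dip := if z = 1 then one else if z = -1 then zero else blank

lemma lf_letterOf {a b : ℤ} (ha : a = -1 ∨ a = 0 ∨ a = 1) (hb : b = -1 ∨ b = 0 ∨ b = 1) :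
    lf (letterOf a) (letterOf b) = -(a * b) := by
  rcases ha with rfl | rfl | rfl <;> rcases hb with rfl | rfl | rfl <;> rfl

/-- The dipole word of `i`. -/
def codeWord (n i : ℕ) : List Dip :=
  (List.range (120 * n)).map fun t : ℕ => letterOf (wordVal n i t)

lemma length_codeWord (n i : ℕ) : (codeWord n i).length = 120 * n := by simp [codeWord]

/-- If two words of length `m` spell out values of `wordVal`, their force is minus the
correlation. -/
lemma force_eq_neg_sum (n i j m : ℕ) (X Y : List Dip) (u v : ℕ → ℤ)
    (hX : X.length = m) (hY : Y.length = m)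
    (hXu : ∀ t (h : t < X.length), X[t] = letterOf (wordVal n i (u t)))
    (hYv : ∀ t (h : t < Y.length), Y[t] = letterOf (wordVal n j (v t))) :
    force X Y = -∑ t ∈ Finset.range m, wordVal n i (u t) * wordVal n j (v t) := by
  have : List.zipWith lf X Y =
      (List.range m).map fun t => -(wordVal n i (u t) * wordVal n j (v t)) := by
    refine List.ext_getElem (by simp [hX, hY]) fun t h1 h2 => ?_
    simp only [List.getElem_zipWith, List.getElem_map, List.getElem_range]
    rw [hXu, hYv, lf_letterOf (wordVal_mem _ _ _) (wordVal_mem _ _ _)]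
  rw [force, this, ← Finset.sum_neg_distrib]
  rfl

lemma getElem_codeWord (n i t : ℕ) (h : t < (codeWord n i).length) :
    (codeWord n i)[t] = letterOf (wordVal n i t) := by simp [codeWord]

lemma getElem_reverse_codeWord (n i t : ℕ) (h : t < (codeWord n i).reverse.length) :
    (codeWord n i).reverse[t] = letterOf (wordVal n i (120 * n - 1 - t)) := by
  rw [List.length_reverse, length_codeWord] at h
  rw [List.getElem_reverse, getElem_codeWord, length_codeWord]
  congr 2
  omega

lemma length_sufx {X : List Dip} {m : ℕ} (hm : m ≤ X.length) : (sufx X m).length = m := by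
  simp [sufx]; omega

lemma force_codeWord_reverse (n i j : ℕ) :
    force (codeWord n i) (codeWord n j).reverse =
      -∑ t ∈ Finset.Ico (0 : ℤ) (120 * n), wordVal n i t * wordVal n j (120 * n - 1 - t) := by
  rw [force_eq_neg_sum n i j (120 * n) _ _ (fun t => t) (fun t => 120 * n - 1 - t)
    (length_codeWord n i) (by rw [List.length_reverse, length_codeWord])
    (getElem_codeWord n i) (getElem_reverse_codeWord n j)]
  rw [sum_Ico_eq_sum_range_of_support 0 (120 * n) (120 * n) le_rfl (by omega) _
    (fun t _ _ h => by omega)]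
  simp

lemma force_codeWord_nonpos (r n i j : ℕ) (hn : n = 3 * r + 1) :
    force (codeWord n i) (codeWord n j) ≤ 0 := by
  rw [force_eq_neg_sum n i j (120 * n) _ _ (fun t => t) (fun t => t)
    (length_codeWord n i) (length_codeWord n j) (getElem_codeWord n i) (getElem_codeWord n j)]
  have := corr_shift_nonneg r n i j hn 0 le_rfl
  rw [sum_Ico_eq_sum_range_of_support 0 (120 * n) (120 * n) le_rfl (by omega) _
    (fun t _ _ h => by omega)] at this
  simpa using this

lemma force_take_sufx_nonpos (r n i j m : ℕ) (hn : n = 3 * r + 1) (hm : m ≤ 120 * n) :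
    force ((codeWord n i).take m) (sufx (codeWord n j) m) ≤ 0 ∧
      force (sufx (codeWord n i) m) ((codeWord n j).take m) ≤ 0 := by
  have corr : ∀ a b : ℕ, 0 ≤ ∑ t ∈ Finset.range m,
      wordVal n a t * wordVal n b (120 * n - m + t) := by
    intro a b
    have := corr_shift_nonneg r n a b hn (120 * n - m) (by omega)
    rw [sum_Ico_eq_sum_range_of_support 0 (120 * n) m le_rfl (by omega) _
      (fun t _ _ h => by rw [wordVal_eq_zero (t := t + _) (by omega), mul_zero])] at this
    refine this.trans_eq (Finset.sum_congr rfl fun t _ => ?_)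
    rw [zero_add, add_comm (t : ℤ)]
  have htake : ∀ a t (h : t < ((codeWord n a).take m).length),
      ((codeWord n a).take m)[t] = letterOf (wordVal n a t) := fun a t h => by
    rw [List.getElem_take, getElem_codeWord]
  have hsufx : ∀ a t (h : t < (sufx (codeWord n a) m).length),
      (sufx (codeWord n a) m)[t] = letterOf (wordVal n a (120 * n - m + t)) := fun a t h => by
    simp only [sufx, List.getElem_drop, getElem_codeWord, length_codeWord]
    congr 2
    omega
  have ltake : ∀ a, ((codeWord n a).take m).length = m := fun a => by
    rw [List.length_take, length_codeWord]; omega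
  have lsufx : ∀ a, (sufx (codeWord n a) m).length = m := fun a =>
    length_sufx (by rw [length_codeWord]; omega)
  constructor
  · rw [force_eq_neg_sum n i j m _ _ (fun t => t) (fun t => 120 * n - m + t)
      (ltake i) (lsufx j) (htake i) (hsufx j)]
    linarith [corr i j]
  · rw [force_eq_neg_sum n i j m _ _ (fun t => 120 * n - m + t) (fun t => t)
      (lsufx i) (ltake j) (hsufx i) (htake j)]
    simp only [mul_comm (wordVal n i _)]
    linarith [corr j i]

lemma force_take_sufx_reverse_nonpos (r n i j m : ℕ) (hn : n = 3 * r + 1) (hr : 1 ≤ r)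
    (hm : m < 120 * n) :
    force ((codeWord n i).take m) (sufx (codeWord n j).reverse m) ≤ 0 ∧
      force (sufx (codeWord n i) m) ((codeWord n j).reverse.take m) ≤ 0 := by
  constructor
  · rw [force_eq_neg_sum n i j m _ _ (fun t => t) (fun t => m - 1 - t)
      (by rw [List.length_take, length_codeWord]; omega)
      (length_sufx (by rw [List.length_reverse, length_codeWord]; omega))
      (fun t h => by rw [List.getElem_take, getElem_codeWord])
      (fun t h => by
        simp only [sufx, List.getElem_drop, getElem_reverse_codeWord, List.length_reverse,
          length_codeWord]
        congr 2
        omega)]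
    have := corr_reflect_nonneg r n i j hn hr (m - 120 * n) (Or.inl (by omega))
    rw [sum_Ico_eq_sum_range_of_support 0 (120 * n) m le_rfl (by omega) _
      (fun t _ _ h => by
        rw [wordVal_eq_zero (t := 120 * n - 1 + _ - t) (by omega), mul_zero])] at this
    have e : ∀ t : ℤ, 120 * (n : ℤ) - 1 + (m - 120 * n) - t = m - 1 - t := by intro t; ring
    simp only [zero_add, e] at this
    linarith
  · rw [force_eq_neg_sum n i j m _ _ (fun t => 120 * n - m + t) (fun t => 120 * n - 1 - t)
      (length_sufx (by rw [length_codeWord]; omega))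
      (by rw [List.length_take, List.length_reverse, length_codeWord]; omega)
      (fun t h => by
        simp only [sufx, List.getElem_drop, getElem_codeWord, length_codeWord]
        congr 2
        omega)
      (fun t h => by rw [List.getElem_take, getElem_reverse_codeWord])]
    have := corr_reflect_nonneg r n i j hn hr (120 * n - m) (Or.inl (by omega))
    rw [sum_Ico_eq_sum_range_of_support (120 * n - m) (120 * n) m (by omega) (by omega) _
      (fun t _ _ h => by
        rw [wordVal_eq_zero (t := 120 * n - 1 + _ - t) (by omega), mul_zero])] at this
    have e : ∀ t : ℤ, 120 * (n : ℤ) - 1 + (120 * n - m) - (120 * n - m + t) =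
      120 * n - 1 - t := by intro t; ring
    simp only [e] at this
    linarith

lemma aligned_codeWord (r n i j : ℕ) (hn : n = 3 * r + 1) (hr : 1 ≤ r) :
    aligned (codeWord n i) (codeWord n j) := by
  refine ⟨force_codeWord_nonpos r n i j hn, fun A hA m h1 hm => ?_⟩
  rw [length_codeWord] at hm
  simp only [List.mem_cons, List.not_mem_nil, or_false] at hA
  rcases hA with rfl | rfl
  · exact force_take_sufx_nonpos r n i j m hn (by omega)
  · exact force_take_sufx_reverse_nonpos r n i j m hn hr (by omega)

lemma exists_testBit_ne {n i j : ℕ} (hi : i < 2 ^ n) (hj : j < 2 ^ n) (hij : i ≠ j) :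
    ∃ q < n, i.testBit q ≠ j.testBit q := by
  by_contra! h
  refine hij (Nat.eq_of_testBit_eq fun q => ?_)
  by_cases hq : q < n
  · exact h q hq
  · have := Nat.pow_le_pow_right (show 0 < 2 by omega) (not_lt.1 hq)
    rw [Nat.testBit_lt_two_pow (hi.trans_le this), Nat.testBit_lt_two_pow (hj.trans_le this)]

lemma attEncodes_codeWord (r n k : ℕ) (hn : n = 3 * r + 1) (hr : 1 ≤ r) (hk : k < 2 ^ n) :
    attEncodes k (codeWord n) unsignedGlue := by
  refine ⟨fun i _ j _ => aligned_codeWord r n i j hn hr, fun i hi j hj => ?_⟩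
  rw [force_codeWord_reverse, unsignedGlue]
  by_cases hij : i = j
  · subst hij
    simpa using corr_reflect_self_neg r n i hn
  · have h := corr_reflect_nonneg r n i j hn hr 0 (Or.inr (exists_testBit_ne
      ((Finset.mem_Icc.1 hi).2.trans_lt hk) ((Finset.mem_Icc.1 hj).2.trans_lt hk) hij))
    simpa [hij] using h

/-- There is a constant `c > 0` such that for every `k ≥ 2` there is a set of `k` dipole
words of common length at most `c·log₂ k` that attractively encodes the canonical
unsigned `k`-glue function. -/
theorem stmt6 :
    ∃ c : ℝ, 0 < c ∧ ∀ k : ℕ, 2 ≤ k →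
      ∃ (l : ℕ) (W : ℕ → List Dip),
        (l : ℝ) ≤ c * Real.logb 2 k ∧
        (∀ i ∈ Finset.Icc 1 k, (W i).length = l) ∧
        attEncodes k W unsignedGlue := by
  refine ⟨840, by norm_num, fun k hk => ?_⟩
  have hlog : 1 ≤ Nat.log 2 k := Nat.log_pos (by norm_num) hk
  set n := 3 * (Nat.log 2 k + 1) + 1 with hn
  refine ⟨120 * n, codeWord n, ?_, fun i _ => length_codeWord n i,
    attEncodes_codeWord (Nat.log 2 k + 1) n k hn (by omega) ?_⟩
  · have h1 : (Nat.log 2 k : ℝ) ≤ Real.logb 2 k := by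
      exact_mod_cast Real.natLog_le_logb k 2
    have h2 : ((120 * n : ℕ) : ℝ) ≤ ((840 * Nat.log 2 k : ℕ) : ℝ) := by
      exact_mod_cast (by omega : 120 * n ≤ 840 * Nat.log 2 k)
    push_cast at h2 ⊢
    linarith
  · exact (Nat.lt_pow_succ_log_self (by norm_num) k).trans_le
      (Nat.pow_le_pow_right (by norm_num) (by omega))
end
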